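/- arXiv:0910.2739 — 2 statements merged into one kernel-verified Lean document; each statement's English description precedes it below -/
import Mathlib

section
/- Fix 2 ≤ p < ∞ and T > 0. There exists a constant C_p > 0 such that for all smooth compactly supported maps v, w : (-T, 0] × S¹ → ℝ^k, (∫_{-T}^0 ∫_0^1 (|∂_t v| |∂_t w|)^p dt ds)^{1/p} ≤ C_p (‖v‖_p + ‖∂_s v‖_p + ‖∂_t∂_t v‖_p)(‖∂_t w‖_p + ‖∂_t∂_t w‖_p). -/
/-!
The product estimate follows from two sup bounds, one in each variable. In the periodic variable, `∂ₜ w(s, ·)`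
has mean zero, so `|∂ₜ w(s, t)|^p ≤ ∫ |∂ₜ∂ₜ w(s, τ)|^p dτ` for every `t` (`norm_pdt_rpow_le`).
In the time variable, `∂ₜ v` lies in `L^∞` in time with values in `L^p(S¹)`:
`sup_s ∫ |∂ₜ v(s, t)|^p dt ≤ K (‖∂ₛ v‖_p^p + ‖∂ₜ∂ₜ v‖_p^p)` (`slice_bound`). Multiplying the two
and integrating in `s` gives the theorem.

The slice bound is an energy argument: `∫ |∂ₜ v|^p dt` vanishes at `s = -T`, and after integrating
by parts in `t` its `s`-derivative is `-p ∫ ⟪∂ₜ(|∂ₜ v|^(p-2) ∂ₜ v), ∂ₛ v⟫ dt`, which is at most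
`p (p - 1) ∫ |∂ₜ v|^(p-2) |∂ₜ∂ₜ v| |∂ₛ v| dt` and is handled by Young's inequality, together with
the bound of `∂ₜ v` by `∂ₜ∂ₜ v`. Since `|x|^(p-2) x` may fail to be smooth at the origin, `|x|^p`
is replaced by `(ε + |x|²)^(p/2)` (`slice_rate_le`, `slice_eps`) and `ε` is sent to zero at the end.
-/


open MeasureTheory Set

/-- Partial derivative in the first (time `s`) variable. -/
noncomputable def pds {k : ℕ} (v : ℝ → ℝ → EuclideanSpace ℝ (Fin k)) :
    ℝ → ℝ → EuclideanSpace ℝ (Fin k) := fun s t => deriv (fun σ => v σ t) s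

/-- Partial derivative in the second (space `t`) variable. -/
noncomputable def pdt {k : ℕ} (v : ℝ → ℝ → EuclideanSpace ℝ (Fin k)) :
    ℝ → ℝ → EuclideanSpace ℝ (Fin k) := fun s t => deriv (v s) t

/-- `L^p` norm over the cylinder `(-T,0] × S¹`, with fundamental domain `(0,1]`
in the periodic variable. -/
noncomputable def LpZ {k : ℕ} (p T : ℝ) (v : ℝ → ℝ → EuclideanSpace ℝ (Fin k)) : ℝ :=
  (∫ s in Ioc (-T) 0, ∫ t in Ioc (0 : ℝ) 1, ‖v s t‖ ^ p) ^ (1 / p)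

open scoped RealInnerProductSpace

/-! ### Calculus of the partial derivatives -/

section Calculus

variable {k : ℕ} {v : ℝ → ℝ → EuclideanSpace ℝ (Fin k)}

lemma hasDerivAt_fst (hv : ContDiff ℝ (⊤ : ℕ∞) (fun q : ℝ × ℝ => v q.1 q.2)) (s t : ℝ) :
    HasDerivAt (fun σ => v σ t) (fderiv ℝ (fun q : ℝ × ℝ => v q.1 q.2) (s, t) (1, 0)) s := by
  have h1 : HasFDerivAt (fun q : ℝ × ℝ => v q.1 q.2) _ (s, t) :=
    (hv.differentiable (by simp) (s, t)).hasFDerivAt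
  have h2 : HasDerivAt (fun σ : ℝ => (σ, t)) ((1 : ℝ), (0 : ℝ)) s :=
    (hasDerivAt_id s).prodMk (hasDerivAt_const s t)
  exact h1.comp_hasDerivAt s h2

lemma hasDerivAt_snd (hv : ContDiff ℝ (⊤ : ℕ∞) (fun q : ℝ × ℝ => v q.1 q.2)) (s t : ℝ) :
    HasDerivAt (v s) (fderiv ℝ (fun q : ℝ × ℝ => v q.1 q.2) (s, t) (0, 1)) t := by
  have h1 : HasFDerivAt (fun q : ℝ × ℝ => v q.1 q.2) _ (s, t) :=
    (hv.differentiable (by simp) (s, t)).hasFDerivAt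
  have h2 : HasDerivAt (fun τ : ℝ => (s, τ)) ((0 : ℝ), (1 : ℝ)) t :=
    (hasDerivAt_const t s).prodMk (hasDerivAt_id t)
  exact h1.comp_hasDerivAt t h2

lemma hasDerivAt_pds (hv : ContDiff ℝ (⊤ : ℕ∞) (fun q : ℝ × ℝ => v q.1 q.2)) (s t : ℝ) :
    HasDerivAt (fun σ => v σ t) (pds v s t) s :=
  (hasDerivAt_fst hv s t).differentiableAt.hasDerivAt

lemma hasDerivAt_pdt (hv : ContDiff ℝ (⊤ : ℕ∞) (fun q : ℝ × ℝ => v q.1 q.2)) (s t : ℝ) :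
    HasDerivAt (v s) (pdt v s t) t :=
  (hasDerivAt_snd hv s t).differentiableAt.hasDerivAt

lemma contDiff_pds (hv : ContDiff ℝ (⊤ : ℕ∞) (fun q : ℝ × ℝ => v q.1 q.2)) :
    ContDiff ℝ (⊤ : ℕ∞) (fun q : ℝ × ℝ => pds v q.1 q.2) := by
  have : (fun q : ℝ × ℝ => pds v q.1 q.2) =
      fun q => fderiv ℝ (fun q : ℝ × ℝ => v q.1 q.2) q (1, 0) := by
    ext1 q
    exact (hasDerivAt_fst hv q.1 q.2).deriv
  rw [this]
  exact (hv.fderiv_right (m := (⊤ : ℕ∞)) (by simp)).clm_apply contDiff_const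

lemma contDiff_pdt (hv : ContDiff ℝ (⊤ : ℕ∞) (fun q : ℝ × ℝ => v q.1 q.2)) :
    ContDiff ℝ (⊤ : ℕ∞) (fun q : ℝ × ℝ => pdt v q.1 q.2) := by
  have : (fun q : ℝ × ℝ => pdt v q.1 q.2) =
      fun q => fderiv ℝ (fun q : ℝ × ℝ => v q.1 q.2) q (0, 1) := by
    ext1 q
    exact (hasDerivAt_snd hv q.1 q.2).deriv
  rw [this]
  exact (hv.fderiv_right (m := (⊤ : ℕ∞)) (by simp)).clm_apply contDiff_const

lemma pds_pdt_comm (hv : ContDiff ℝ (⊤ : ℕ∞) (fun q : ℝ × ℝ => v q.1 q.2)) (s t : ℝ) :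
    pds (pdt v) s t = pdt (pds v) s t := by
  set V := fun q : ℝ × ℝ => v q.1 q.2 with hV
  have hd : Differentiable ℝ (fderiv ℝ V) :=
    (hv.fderiv_right (m := (⊤ : ℕ∞)) (by simp)).differentiable (by simp)
  have e1 : (fun q : ℝ × ℝ => pdt v q.1 q.2) = fun q => fderiv ℝ V q (0, 1) := by
    ext1 q
    exact (hasDerivAt_snd hv q.1 q.2).deriv
  have e2 : (fun q : ℝ × ℝ => pds v q.1 q.2) = fun q => fderiv ℝ V q (1, 0) := by
    ext1 q
    exact (hasDerivAt_fst hv q.1 q.2).deriv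
  have f1 : pds (pdt v) s t = fderiv ℝ (fun q : ℝ × ℝ => pdt v q.1 q.2) (s, t) (1, 0) :=
    (hasDerivAt_fst (contDiff_pdt hv) s t).deriv
  have f2 : pdt (pds v) s t = fderiv ℝ (fun q : ℝ × ℝ => pds v q.1 q.2) (s, t) (0, 1) :=
    (hasDerivAt_snd (contDiff_pds hv) s t).deriv
  rw [f1, f2, e1, e2, fderiv_clm_apply (hd _) (by fun_prop), fderiv_clm_apply (hd _) (by fun_prop)]
  have h2 : minSmoothness ℝ 2 ≤ ((⊤ : ℕ∞) : WithTop ℕ∞) := by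
    rw [minSmoothness_of_isRCLikeNormedField]
    exact WithTop.coe_le_coe.2 le_top
  simpa using (hv.contDiffAt (x := (s, t))).isSymmSndFDerivAt h2 (1, 0) (0, 1)

lemma pdt_periodic (hper : ∀ s t, v s (t + 1) = v s t) (s t : ℝ) :
    pdt v s (t + 1) = pdt v s t := by
  unfold pdt
  rw [← deriv_comp_add_const]
  congr 1
  ext1 τ
  exact hper s τ

lemma pds_periodic (hper : ∀ s t, v s (t + 1) = v s t) (s t : ℝ) :
    pds v s (t + 1) = pds v s t := by
  unfold pds
  simp only [hper]

end Calculus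

/-! ### One-dimensional and elementary inequalities -/

section OneDim

lemma jensen_rpow {p : ℝ} (hp : 1 ≤ p) {f : ℝ → ℝ} (hf : Continuous f) (h0 : ∀ t, 0 ≤ f t) :
    (∫ t in (0 : ℝ)..1, f t) ^ p ≤ ∫ t in (0 : ℝ)..1, f t ^ p := by
  have : IsProbabilityMeasure (volume.restrict (Ioc (0 : ℝ) 1)) := ⟨by simp⟩
  have hc : Continuous (fun x : ℝ => x ^ p) :=
    Real.continuous_rpow_const (by linarith)
  have hi : ∀ g : ℝ → ℝ, Continuous g → Integrable g (volume.restrict (Ioc (0 : ℝ) 1)) :=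
    fun g hg => (hg.integrableOn_Icc (a := 0) (b := 1)).mono_set Ioc_subset_Icc_self
  rw [intervalIntegral.integral_of_le zero_le_one, intervalIntegral.integral_of_le zero_le_one]
  exact (convexOn_rpow hp).map_integral_le hc.continuousOn isClosed_Ici
    (Filter.Eventually.of_forall h0) (hi _ hf) (hi _ (hc.comp hf))

/-- Poincaré-type sup bound: `∂ₜ v` has mean zero over a period, so it is controlled uniformly
by its own `t`-derivative. -/
lemma norm_pdt_rpow_le {p : ℝ} (hp : 1 ≤ p) {k : ℕ} {v : ℝ → ℝ → EuclideanSpace ℝ (Fin k)}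
    (hv : ContDiff ℝ (⊤ : ℕ∞) (fun q : ℝ × ℝ => v q.1 q.2))
    (hper : ∀ s t, v s (t + 1) = v s t) (s : ℝ) {t : ℝ} (ht : t ∈ Icc (0 : ℝ) 1) :
    ‖pdt v s t‖ ^ p ≤ ∫ τ in (0 : ℝ)..1, ‖pdt (pdt v) s τ‖ ^ p := by
  have hv1 := contDiff_pdt hv
  have hv2 := contDiff_pdt hv1
  have hc1 : Continuous (pdt v s) := hv1.continuous.comp (by fun_prop : Continuous fun τ => (s, τ))
  have hc2 : Continuous (pdt (pdt v) s) :=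
    hv2.continuous.comp (by fun_prop : Continuous fun τ => (s, τ))
  have hmean : ∫ τ in (0 : ℝ)..1, pdt v s τ = 0 := by
    rw [intervalIntegral.integral_eq_sub_of_hasDerivAt (fun τ _ => hasDerivAt_pdt hv s τ)
      (hc1.intervalIntegrable _ _), sub_eq_zero]
    simpa using hper s 0
  have hosc : ∀ τ ∈ uIoc (0 : ℝ) 1,
      ‖pdt v s t - pdt v s τ‖ ≤ ∫ r in (0 : ℝ)..1, ‖pdt (pdt v) s r‖ := by
    intro τ hτ
    rw [uIoc_of_le zero_le_one] at hτ
    rw [← intervalIntegral.integral_eq_sub_of_hasDerivAt (fun r _ => hasDerivAt_pdt hv1 s r)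
      (hc2.intervalIntegrable _ _)]
    refine intervalIntegral.norm_integral_le_integral_norm_uIoc.trans ?_
    rw [intervalIntegral.integral_of_le zero_le_one]
    refine setIntegral_mono_set ?_ (Filter.Eventually.of_forall fun _ => norm_nonneg _) ?_
    · exact (hc2.norm.integrableOn_Icc (a := 0) (b := 1)).mono_set Ioc_subset_Icc_self
    · refine LE.le.eventuallyLE (Ioc_subset_Ioc ?_ ?_)
      · exact le_min hτ.1.le ht.1
      · exact max_le hτ.2 ht.2
  have hsup : ‖pdt v s t‖ ≤ ∫ r in (0 : ℝ)..1, ‖pdt (pdt v) s r‖ := by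
    have h := intervalIntegral.norm_integral_le_of_norm_le_const hosc
    rw [intervalIntegral.integral_sub (by simp) (hc1.intervalIntegrable _ _), hmean] at h
    simpa using h
  exact (Real.rpow_le_rpow (norm_nonneg _) hsup (by linarith)).trans
    (jensen_rpow hp hc2.norm fun _ => norm_nonneg _)

/-- A Young-type inequality: `√D`, `a` and `b` are at most their maximum `M`, and the left-hand side
is homogeneous of degree `p` in them, hence at most `M ^ p`. -/
lemma young_three {p D a b : ℝ} (hp : 2 ≤ p) (hD : 0 ≤ D) (ha : 0 ≤ a) (hb : 0 ≤ b) :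
    D ^ (p / 2 - 1) * (a * b) ≤ D ^ (p / 2) + (a ^ p + b ^ p) := by
  set M := max (√D) (max a b) with hM
  have hM0 : 0 ≤ M := (Real.sqrt_nonneg D).trans (le_max_left _ _)
  have hDM : D ≤ M ^ 2 := (Real.sqrt_le_left hM0).1 (le_max_left _ _)
  have haM : a ≤ M := (le_max_left a b).trans (le_max_right _ _)
  have hbM : b ≤ M := (le_max_right a b).trans (le_max_right _ _)
  have h1 : D ^ (p / 2 - 1) * (a * b) ≤ M ^ p := by
    calc D ^ (p / 2 - 1) * (a * b) ≤ (M ^ 2) ^ (p / 2 - 1) * (M * M) := by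
          gcongr
          linarith
      _ = (M ^ 2) ^ (p / 2 - 1) * (M ^ 2) ^ (1 : ℝ) := by rw [Real.rpow_one]; ring
      _ = (M ^ 2) ^ (p / 2) := by
          rw [← Real.rpow_add_of_nonneg (by positivity) (by linarith) zero_le_one]
          congr 1
          ring
      _ = M ^ p := by
          rw [← Real.rpow_natCast M 2, ← Real.rpow_mul hM0]
          congr 1
          push_cast
          ring
  have hs : √D ^ p = D ^ (p / 2) := by
    rw [Real.sqrt_eq_rpow, ← Real.rpow_mul hD]
    congr 1
    ring
  have p1 : 0 ≤ D ^ (p / 2) := by positivity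
  have p2 : 0 ≤ a ^ p := by positivity
  have p3 : 0 ≤ b ^ p := by positivity
  refine h1.trans ?_
  rcases max_choice (√D) (max a b) with h | h
  · rw [hM, h, hs]; linarith
  · rcases max_choice a b with h' | h' <;> rw [hM, h, h'] <;> linarith

lemma add_sq_rpow_le {p e x : ℝ} (hp : 0 ≤ p) (he : 0 ≤ e) (hx : 0 ≤ x) :
    (e + x ^ 2) ^ (p / 2) ≤ 2 ^ (p / 2) * (e ^ (p / 2) + x ^ p) := by
  have hxp : (x ^ 2) ^ (p / 2) = x ^ p := by
    rw [← Real.rpow_natCast x 2, ← Real.rpow_mul hx]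
    congr 1
    push_cast
    ring
  have p1 : 0 ≤ e ^ (p / 2) := by positivity
  have p2 : 0 ≤ (x ^ 2) ^ (p / 2) := by positivity
  rw [← hxp]
  rcases le_total e (x ^ 2) with h | h
  · calc (e + x ^ 2) ^ (p / 2) ≤ (2 * x ^ 2) ^ (p / 2) := by gcongr; linarith
      _ = 2 ^ (p / 2) * (x ^ 2) ^ (p / 2) := Real.mul_rpow (by norm_num) (by positivity)
      _ ≤ _ := by gcongr; linarith
  · calc (e + x ^ 2) ^ (p / 2) ≤ (2 * e) ^ (p / 2) := by gcongr; linarith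
      _ = 2 ^ (p / 2) * e ^ (p / 2) := Real.mul_rpow (by norm_num) he
      _ ≤ _ := by gcongr; linarith

lemma integral_swap_continuous {F : ℝ → ℝ → ℝ} (hF : Continuous fun q : ℝ × ℝ => F q.1 q.2)
    {a b : ℝ} (hab : a ≤ b) :
    ∫ t in (0 : ℝ)..1, ∫ s in a..b, F s t = ∫ s in a..b, ∫ t in (0 : ℝ)..1, F s t := by
  simp only [intervalIntegral.integral_of_le zero_le_one, intervalIntegral.integral_of_le hab]
  refine (integral_integral_swap ?_).symm
  rw [Measure.prod_restrict]
  exact (hF.continuousOn.integrableOn_compact (isCompact_Icc.prod isCompact_Icc)).mono_set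
    (Set.prod_mono Ioc_subset_Icc_self Ioc_subset_Icc_self)

lemma continuous_slice {F : ℝ → ℝ → ℝ} (hF : Continuous fun q : ℝ × ℝ => F q.1 q.2) (σ : ℝ) :
    Continuous (F σ) :=
  hF.comp (by fun_prop : Continuous fun τ => (σ, τ))

lemma continuous_slice_fst {F : ℝ → ℝ → ℝ} (hF : Continuous fun q : ℝ × ℝ => F q.1 q.2) (t : ℝ) :
    Continuous fun σ => F σ t :=
  hF.comp (by fun_prop : Continuous fun σ : ℝ => (σ, t))

lemma continuous_slice_integral {F : ℝ → ℝ → ℝ} (hF : Continuous fun q : ℝ × ℝ => F q.1 q.2) :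
    Continuous fun s => ∫ t in (0 : ℝ)..1, F s t :=
  intervalIntegral.continuous_parametric_intervalIntegral_of_continuous' hF 0 1

end OneDim

/-! ### The regularized energy and the uniform-in-time slice bound -/

section Slice

variable {k : ℕ} {v : ℝ → ℝ → EuclideanSpace ℝ (Fin k)}

/-- Bounds the rate of change in `s` of the regularized energy `∫ (ε + |∂ₜ v|²)^(p/2) dt`, which
is the left-hand side. Integrating by parts in `t` removes the mixed derivative `∂ₜ∂ₛ v`; there are
no boundary terms by periodicity. -/
lemma slice_rate_le {p ε : ℝ} (hp : 2 ≤ p) (hε : 0 < ε)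
    (hv : ContDiff ℝ (⊤ : ℕ∞) (fun q : ℝ × ℝ => v q.1 q.2))
    (hper : ∀ s t, v s (t + 1) = v s t) (s : ℝ) :
    ∫ t in (0 : ℝ)..1, p * (ε + ‖pdt v s t‖ ^ 2) ^ (p / 2 - 1) * ⟪pdt v s t, pdt (pds v) s t⟫ ≤
      ∫ t in (0 : ℝ)..1, p * (p - 1) * ((ε + ‖pdt v s t‖ ^ 2) ^ (p / 2) +
        (‖pdt (pdt v) s t‖ ^ p + ‖pds v s t‖ ^ p)) := by
  have hι : Continuous fun τ : ℝ => (s, τ) := by fun_prop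
  have hu := contDiff_pdt hv
  have hz := contDiff_pds hv
  have cu : Continuous (pdt v s) := hu.continuous.comp hι
  have cy : Continuous (pdt (pdt v) s) := (contDiff_pdt hu).continuous.comp hι
  have cz : Continuous (pds v s) := hz.continuous.comp hι
  have cx : Continuous (pdt (pds v) s) := (contDiff_pdt hz).continuous.comp hι
  have hD : ∀ t, 0 < ε + ‖pdt v s t‖ ^ 2 := fun t => by positivity
  have cD : ∀ r : ℝ, Continuous fun t => (ε + ‖pdt v s t‖ ^ 2) ^ r := fun r =>
    (by fun_prop : Continuous fun t => ε + ‖pdt v s t‖ ^ 2).rpow_const fun t => Or.inl (hD t).ne'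
  -- the part of the integrand left over after removing a total `t`-derivative
  set R : ℝ → ℝ := fun t => p * ((p / 2 - 1) * (ε + ‖pdt v s t‖ ^ 2) ^ (p / 2 - 1 - 1) *
      (2 * ⟪pdt v s t, pdt (pdt v) s t⟫) * ⟪pdt v s t, pds v s t⟫ +
      (ε + ‖pdt v s t‖ ^ 2) ^ (p / 2 - 1) * ⟪pdt (pdt v) s t, pds v s t⟫) with hR
  have cR : Continuous R := by
    have := cD (p / 2 - 1)
    have := cD (p / 2 - 1 - 1)
    fun_prop
  have cM : Continuous fun t =>
      p * (ε + ‖pdt v s t‖ ^ 2) ^ (p / 2 - 1) * ⟪pdt v s t, pdt (pds v) s t⟫ := by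
    have := cD (p / 2 - 1)
    fun_prop
  have hderiv : ∀ t, HasDerivAt
      (fun t => p * ((ε + ‖pdt v s t‖ ^ 2) ^ (p / 2 - 1) * ⟪pdt v s t, pds v s t⟫))
      (R t + p * (ε + ‖pdt v s t‖ ^ 2) ^ (p / 2 - 1) * ⟪pdt v s t, pdt (pds v) s t⟫) t := by
    intro t
    have d1 := hasDerivAt_pdt hu s t
    have d2 := hasDerivAt_pdt hz s t
    have d3 := ((d1.norm_sq).const_add ε).rpow_const (p := p / 2 - 1) (Or.inl (hD t).ne')
    have d4 := (d3.mul (d1.inner ℝ d2)).const_mul p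
    refine d4.congr_deriv ?_
    simp only [hR]
    ring
  have hzero : ∫ t in (0 : ℝ)..1,
      (R t + p * (ε + ‖pdt v s t‖ ^ 2) ^ (p / 2 - 1) * ⟪pdt v s t, pdt (pds v) s t⟫) = 0 := by
    rw [intervalIntegral.integral_eq_sub_of_hasDerivAt (fun t _ => hderiv t)
      ((cR.add cM).intervalIntegrable _ _), sub_eq_zero]
    have e1 : pdt v s 1 = pdt v s 0 := by simpa using pdt_periodic hper s 0
    have e2 : pds v s 1 = pds v s 0 := by simpa using pds_periodic hper s 0
    rw [e1, e2]
  rw [intervalIntegral.integral_add (cR.intervalIntegrable _ _) (cM.intervalIntegrable _ _)]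
    at hzero
  have hpt : ∀ t, -R t ≤ p * (p - 1) * ((ε + ‖pdt v s t‖ ^ 2) ^ (p / 2) +
        (‖pdt (pdt v) s t‖ ^ p + ‖pds v s t‖ ^ p)) := by
    intro t
    refine (neg_le_abs _).trans ?_
    set D := ε + ‖pdt v s t‖ ^ 2 with hDdef
    have hDt : 0 < D := hD t
    set u := pdt v s t
    set y := pdt (pdt v) s t
    set z := pds v s t
    have hsplit : D ^ (p / 2 - 1) = D ^ (p / 2 - 1 - 1) * D := by
      rw [Real.rpow_sub_one hDt.ne' (p / 2 - 1)]
      field_simp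
    have i1 : |⟪u, y⟫| ≤ ‖u‖ * ‖y‖ := abs_real_inner_le_norm _ _
    have i2 : |⟪u, z⟫| ≤ ‖u‖ * ‖z‖ := abs_real_inner_le_norm _ _
    have i3 : |⟪y, z⟫| ≤ ‖y‖ * ‖z‖ := abs_real_inner_le_norm _ _
    have hq : 0 ≤ p / 2 - 1 := by linarith
    have huD : ‖u‖ ^ 2 ≤ D := by linarith
    calc |R t| ≤ p * ((p / 2 - 1) * D ^ (p / 2 - 1 - 1) * (2 * |⟪u, y⟫|) * |⟪u, z⟫| +
          D ^ (p / 2 - 1) * |⟪y, z⟫|) := by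
          simp only [hR]
          rw [abs_mul, abs_of_nonneg (by linarith : 0 ≤ p)]
          gcongr
          refine (abs_add_le _ _).trans_eq ?_
          simp only [abs_mul]
          rw [abs_of_nonneg hq, abs_of_nonneg (Real.rpow_nonneg hDt.le (p / 2 - 1 - 1)),
            abs_of_nonneg (Real.rpow_nonneg hDt.le (p / 2 - 1)), abs_two]
      _ ≤ p * ((p / 2 - 1) * D ^ (p / 2 - 1 - 1) * (2 * (‖u‖ * ‖y‖)) * (‖u‖ * ‖z‖) +
          D ^ (p / 2 - 1) * (‖y‖ * ‖z‖)) := by gcongr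
      _ = p * ((p - 2) * (D ^ (p / 2 - 1 - 1) * ‖u‖ ^ 2) * (‖y‖ * ‖z‖) +
          D ^ (p / 2 - 1) * (‖y‖ * ‖z‖)) := by ring
      _ ≤ p * ((p - 2) * (D ^ (p / 2 - 1 - 1) * D) * (‖y‖ * ‖z‖) +
          D ^ (p / 2 - 1) * (‖y‖ * ‖z‖)) := by
          have : 0 ≤ p - 2 := by linarith
          gcongr
      _ = p * (p - 1) * (D ^ (p / 2 - 1) * (‖y‖ * ‖z‖)) := by rw [← hsplit]; ring
      _ ≤ _ := by
          have : 0 ≤ p * (p - 1) := mul_nonneg (by linarith) (by linarith)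
          gcongr
          exact young_three hp hDt.le (norm_nonneg _) (norm_nonneg _)
  calc _ = ∫ t in (0 : ℝ)..1, -R t := by
        rw [intervalIntegral.integral_neg]; linarith
    _ ≤ _ := by
        refine intervalIntegral.integral_mono_on zero_le_one (cR.neg.intervalIntegrable _ _) ?_
          fun t _ => hpt t
        refine Continuous.intervalIntegrable ?_ _ _
        have := cD (p / 2)
        have c1 : Continuous fun t => ‖pdt (pdt v) s t‖ ^ p :=
          cy.norm.rpow_const fun _ => Or.inr (by linarith)
        have c2 : Continuous fun t => ‖pds v s t‖ ^ p :=
          cz.norm.rpow_const fun _ => Or.inr (by linarith)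
        fun_prop

set_option maxHeartbeats 800000 in
/-- The slice bound with a regularization error. The regularized energy equals `ε ^ (p / 2)` at
`s = -T`, where `v` vanishes, and grows at the rate bounded in `slice_rate_le`; the energy term of
that rate is absorbed by the mean-zero bound of `∂ₜ v` by `∂ₜ∂ₜ v`, so no Gronwall argument is
needed. -/
lemma slice_eps {p T ε : ℝ} (hp : 2 ≤ p) (hε : 0 < ε)
    (hv : ContDiff ℝ (⊤ : ℕ∞) (fun q : ℝ × ℝ => v q.1 q.2))
    (hper : ∀ s t, v s (t + 1) = v s t)
    (hsupp : ∃ a, -T < a ∧ ∀ s t, s ≤ a → v s t = 0) {s : ℝ} (hs : s ∈ Icc (-T) 0) :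
    ∫ t in (0 : ℝ)..1, ‖pdt v s t‖ ^ p ≤
      ε ^ (p / 2) * (1 + p * (p - 1) * 2 ^ (p / 2) * T) +
      p * (p - 1) * (2 ^ (p / 2) + 1) *
        ∫ σ in (-T)..0, ∫ t in (0 : ℝ)..1, (‖pds v σ t‖ ^ p + ‖pdt (pdt v) σ t‖ ^ p) := by
  have hp0 : 0 ≤ p := by linarith
  have hT : -T ≤ 0 := hs.1.trans hs.2
  have hK : 0 ≤ p * (p - 1) := mul_nonneg hp0 (by linarith)
  have hu := contDiff_pdt hv
  have hz := contDiff_pds hv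
  have cu := hu.continuous
  have cy := (contDiff_pdt hu).continuous
  have cz := hz.continuous
  have cx := (contDiff_pdt hz).continuous
  have hD : ∀ q : ℝ × ℝ, 0 < ε + ‖pdt v q.1 q.2‖ ^ 2 := fun q => by positivity
  have cD : ∀ r : ℝ, Continuous fun q : ℝ × ℝ => (ε + ‖pdt v q.1 q.2‖ ^ 2) ^ r := fun r =>
    (by fun_prop : Continuous fun q : ℝ × ℝ => ε + ‖pdt v q.1 q.2‖ ^ 2).rpow_const
      fun q => Or.inl (hD q).ne'
  have cnu : Continuous fun q : ℝ × ℝ => ‖pdt v q.1 q.2‖ ^ p :=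
    cu.norm.rpow_const fun _ => Or.inr hp0
  have cny : Continuous fun q : ℝ × ℝ => ‖pdt (pdt v) q.1 q.2‖ ^ p :=
    cy.norm.rpow_const fun _ => Or.inr hp0
  have cnz : Continuous fun q : ℝ × ℝ => ‖pds v q.1 q.2‖ ^ p :=
    cz.norm.rpow_const fun _ => Or.inr hp0
  -- the `s`-derivative of the regularized density
  set P : ℝ → ℝ → ℝ := fun σ t =>
    p * (ε + ‖pdt v σ t‖ ^ 2) ^ (p / 2 - 1) * ⟪pdt v σ t, pdt (pds v) σ t⟫ with hP
  have cP : Continuous fun q : ℝ × ℝ => P q.1 q.2 := by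
    have := cD (p / 2 - 1)
    simp only [hP]
    fun_prop
  set B : ℝ → ℝ → ℝ := fun σ t => p * (p - 1) * ((ε + ‖pdt v σ t‖ ^ 2) ^ (p / 2) +
        (‖pdt (pdt v) σ t‖ ^ p + ‖pds v σ t‖ ^ p)) with hB
  have cB : Continuous fun q : ℝ × ℝ => B q.1 q.2 := by
    have := cD (p / 2)
    simp only [hB]
    fun_prop
  have hftc : ∀ t, ∫ σ in (-T)..s, P σ t = (ε + ‖pdt v s t‖ ^ 2) ^ (p / 2) - ε ^ (p / 2) := by
    intro t
    have hd : ∀ σ, HasDerivAt (fun σ => (ε + ‖pdt v σ t‖ ^ 2) ^ (p / 2)) (P σ t) σ := by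
      intro σ
      have d1 := hasDerivAt_pds hu σ t
      rw [pds_pdt_comm hv] at d1
      have d3 := ((d1.norm_sq).const_add ε).rpow_const (p := p / 2) (Or.inl (hD (σ, t)).ne')
      refine d3.congr_deriv ?_
      simp only [hP]
      ring
    have cPt : Continuous fun σ => P σ t := continuous_slice_fst (F := P) cP t
    rw [intervalIntegral.integral_eq_sub_of_hasDerivAt (fun σ _ => hd σ)
      (cPt.intervalIntegrable _ _)]
    obtain ⟨a, ha, h0⟩ := hsupp
    have : pdt v (-T) t = 0 := by
      have : v (-T) = fun _ => 0 := funext fun τ => h0 _ _ ha.le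
      simp [pdt, this]
    rw [this]
    simp
  have hBnn : ∀ σ, 0 ≤ ∫ t in (0 : ℝ)..1, B σ t := fun σ =>
    intervalIntegral.integral_nonneg zero_le_one fun t _ => by
      simp only [hB]; positivity
  have hmain : (∫ t in (0 : ℝ)..1, (ε + ‖pdt v s t‖ ^ 2) ^ (p / 2)) - ε ^ (p / 2) ≤
      ∫ σ in (-T)..0, ∫ t in (0 : ℝ)..1, B σ t := by
    calc _ = ∫ t in (0 : ℝ)..1, ∫ σ in (-T)..s, P σ t := by
          simp only [hftc]
          rw [intervalIntegral.integral_sub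
            ((continuous_slice (F := fun σ t => (ε + ‖pdt v σ t‖ ^ 2) ^ (p / 2)) (cD (p / 2))
              s).intervalIntegrable _ _) (by simp)]
          simp
      _ = ∫ σ in (-T)..s, ∫ t in (0 : ℝ)..1, P σ t := integral_swap_continuous (F := P) cP hs.1
      _ ≤ ∫ σ in (-T)..s, ∫ t in (0 : ℝ)..1, B σ t :=
          intervalIntegral.integral_mono_on hs.1
            ((continuous_slice_integral (F := P) cP).intervalIntegrable _ _)
            ((continuous_slice_integral (F := B) cB).intervalIntegrable _ _)
            fun σ _ => slice_rate_le hp hε hv hper σ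
      _ ≤ _ := by
          refine intervalIntegral.integral_mono_interval le_rfl hs.1 hs.2
            (Filter.Eventually.of_forall hBnn)
            ((continuous_slice_integral (F := B) cB).intervalIntegrable _ _)
  have hBle : ∀ σ, ∫ t in (0 : ℝ)..1, B σ t ≤ p * (p - 1) * 2 ^ (p / 2) * ε ^ (p / 2) +
      p * (p - 1) * (2 ^ (p / 2) + 1) *
        ∫ t in (0 : ℝ)..1, (‖pds v σ t‖ ^ p + ‖pdt (pdt v) σ t‖ ^ p) := by
    intro σ
    have iz := (continuous_slice (F := fun σ t => ‖pds v σ t‖ ^ p) cnz σ).intervalIntegrable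
      (μ := volume) 0 1
    have iy := (continuous_slice (F := fun σ t => ‖pdt (pdt v) σ t‖ ^ p) cny σ).intervalIntegrable
      (μ := volume) 0 1
    set Y := ∫ τ in (0 : ℝ)..1, ‖pdt (pdt v) σ τ‖ ^ p with hY
    have hZ0 : 0 ≤ ∫ τ in (0 : ℝ)..1, ‖pds v σ τ‖ ^ p :=
      intervalIntegral.integral_nonneg zero_le_one fun t _ => by positivity
    have h2 : (0 : ℝ) < 2 ^ (p / 2) := by positivity
    calc ∫ t in (0 : ℝ)..1, B σ t ≤ ∫ t in (0 : ℝ)..1, p * (p - 1) *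
          (2 ^ (p / 2) * (ε ^ (p / 2) + Y) + (‖pdt (pdt v) σ t‖ ^ p + ‖pds v σ t‖ ^ p)) := by
          refine intervalIntegral.integral_mono_on zero_le_one
            ((continuous_slice (F := B) cB σ).intervalIntegrable _ _)
            (((by simp : IntervalIntegrable (fun _ : ℝ => 2 ^ (p / 2) * (ε ^ (p / 2) + Y))
              volume 0 1).add (iy.add iz)).const_mul _) fun t ht => ?_
          simp only [hB]
          gcongr
          refine (add_sq_rpow_le hp0 hε.le (norm_nonneg _)).trans ?_
          gcongr
          exact norm_pdt_rpow_le (by linarith) hv hper σ ht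
      _ = p * (p - 1) * (2 ^ (p / 2) * (ε ^ (p / 2) + Y) +
          (Y + ∫ t in (0 : ℝ)..1, ‖pds v σ t‖ ^ p)) := by
          rw [intervalIntegral.integral_const_mul,
            intervalIntegral.integral_add (by simp) (iy.add iz),
            intervalIntegral.integral_add iy iz, ← hY, intervalIntegral.integral_const, sub_zero,
            one_smul]
      _ ≤ _ := by
          rw [intervalIntegral.integral_add iz iy]
          have := mul_nonneg (mul_nonneg hK h2.le) hZ0
          linarith
  have hlow : ∫ t in (0 : ℝ)..1, ‖pdt v s t‖ ^ p ≤
      ∫ t in (0 : ℝ)..1, (ε + ‖pdt v s t‖ ^ 2) ^ (p / 2) := by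
    refine intervalIntegral.integral_mono_on zero_le_one
      ((continuous_slice (F := fun σ t => ‖pdt v σ t‖ ^ p) cnu s).intervalIntegrable _ _)
      ((continuous_slice (F := fun σ t => (ε + ‖pdt v σ t‖ ^ 2) ^ (p / 2)) (cD (p / 2))
        s).intervalIntegrable _ _) fun t _ => ?_
    calc ‖pdt v s t‖ ^ p = (‖pdt v s t‖ ^ 2) ^ (p / 2) := by
          rw [← Real.rpow_natCast _ 2, ← Real.rpow_mul (norm_nonneg _)]
          congr 1
          push_cast
          ring
      _ ≤ _ := by gcongr; linarith
  have hBint : ∫ σ in (-T)..0, ∫ t in (0 : ℝ)..1, B σ t ≤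
      p * (p - 1) * 2 ^ (p / 2) * ε ^ (p / 2) * T + p * (p - 1) * (2 ^ (p / 2) + 1) *
        ∫ σ in (-T)..0, ∫ t in (0 : ℝ)..1, (‖pds v σ t‖ ^ p + ‖pdt (pdt v) σ t‖ ^ p) := by
    have ci := (continuous_slice_integral
      (F := fun σ t => ‖pds v σ t‖ ^ p + ‖pdt (pdt v) σ t‖ ^ p)
      (cnz.add cny)).intervalIntegrable (μ := volume) (-T) 0
    refine (intervalIntegral.integral_mono_on hT
      ((continuous_slice_integral (F := B) cB).intervalIntegrable _ _)
      ((by simp : IntervalIntegrable (fun _ : ℝ => p * (p - 1) * 2 ^ (p / 2) * ε ^ (p / 2))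
        volume (-T) 0).add (ci.const_mul _)) fun σ _ => hBle σ).trans_eq ?_
    rw [intervalIntegral.integral_add (by simp) (ci.const_mul _),
      intervalIntegral.integral_const_mul]
    simp
    ring
  linarith

/-- The trace-type estimate: `∂ₜ v` is bounded in `L^∞` in time with values in `L^p(S¹)`. -/
lemma slice_bound {p T : ℝ} (hp : 2 ≤ p)
    (hv : ContDiff ℝ (⊤ : ℕ∞) (fun q : ℝ × ℝ => v q.1 q.2))
    (hper : ∀ s t, v s (t + 1) = v s t)
    (hsupp : ∃ a, -T < a ∧ ∀ s t, s ≤ a → v s t = 0) {s : ℝ} (hs : s ∈ Icc (-T) 0) :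
    ∫ t in (0 : ℝ)..1, ‖pdt v s t‖ ^ p ≤ p * (p - 1) * (2 ^ (p / 2) + 1) *
        ∫ σ in (-T)..0, ∫ t in (0 : ℝ)..1, (‖pds v σ t‖ ^ p + ‖pdt (pdt v) σ t‖ ^ p) := by
  have hT : 0 ≤ T := by linarith [hs.1, hs.2]
  have hA : 0 < 1 + p * (p - 1) * 2 ^ (p / 2) * T := by
    have : 0 ≤ p * (p - 1) := mul_nonneg (by linarith) (by linarith)
    positivity
  refine le_of_forall_pos_le_add fun δ hδ => ?_
  have hd : 0 < δ / (1 + p * (p - 1) * 2 ^ (p / 2) * T) := by positivity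
  -- `ε` is chosen so that the regularization error equals `δ`
  have h := slice_eps hp (Real.rpow_pos_of_pos hd (2 / p)) hv hper hsupp hs
  rw [← Real.rpow_mul hd.le, div_mul_div_cancel₀ (by linarith), div_self two_ne_zero,
    Real.rpow_one, div_mul_cancel₀ _ hA.ne'] at h
  linarith

end Slice

/-! ### The product estimate -/

lemma LpZ_eq {k : ℕ} {p T : ℝ} (hT : 0 < T) (v : ℝ → ℝ → EuclideanSpace ℝ (Fin k)) :
    LpZ p T v = (∫ s in (-T)..0, ∫ t in (0 : ℝ)..1, ‖v s t‖ ^ p) ^ (1 / p) := by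
  simp only [LpZ, intervalIntegral.integral_of_le zero_le_one,
    intervalIntegral.integral_of_le (by linarith : -T ≤ 0)]

/-- The product estimate (Theorem 1): the quadratic nonlinearity of the heat flow is
bounded in `L^p` (not just `L^{p/2}`). Maps are smooth, 1-periodic in `t`, and
compactly supported in `(-T,0]` in the `s`-variable. -/
theorem product_estimate (p T : ℝ) (hp : 2 ≤ p) (hT : 0 < T) :
    ∃ C : ℝ, 0 < C ∧
      ∀ (k : ℕ) (v w : ℝ → ℝ → EuclideanSpace ℝ (Fin k)),
        ContDiff ℝ (⊤ : ℕ∞) (fun q : ℝ × ℝ => v q.1 q.2) →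
        ContDiff ℝ (⊤ : ℕ∞) (fun q : ℝ × ℝ => w q.1 q.2) →
        (∀ s t, v s (t + 1) = v s t) → (∀ s t, w s (t + 1) = w s t) →
        (∃ a, -T < a ∧ ∀ s t, s ≤ a → v s t = 0) →
        (∃ a, -T < a ∧ ∀ s t, s ≤ a → w s t = 0) →
        (∫ s in Ioc (-T) 0, ∫ t in Ioc (0 : ℝ) 1,
            (‖pdt v s t‖ * ‖pdt w s t‖) ^ p) ^ (1 / p)
          ≤ C * (LpZ p T v + LpZ p T (pds v) + LpZ p T (pdt (pdt v)))
              * (LpZ p T (pdt w) + LpZ p T (pdt (pdt w))) := by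
  have hp0 : 0 < p := by linarith
  have hT' : -T ≤ 0 := by linarith
  have hK : 0 < p * (p - 1) * (2 ^ (p / 2) + 1) := by
    have : 0 < p * (p - 1) := mul_pos (by linarith) (by linarith)
    positivity
  set K := p * (p - 1) * (2 ^ (p / 2) + 1) with hKdef
  refine ⟨K ^ (1 / p), by positivity, ?_⟩
  intro k v w hv hw hvper hwper hvs _
  have hnn : ∀ f : ℝ → ℝ → EuclideanSpace ℝ (Fin k),
      0 ≤ ∫ s in (-T)..0, ∫ t in (0 : ℝ)..1, ‖f s t‖ ^ p := fun f =>
    intervalIntegral.integral_nonneg hT' fun s _ =>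
      intervalIntegral.integral_nonneg zero_le_one fun t _ => by positivity
  have hcont : ∀ f : ℝ → ℝ → EuclideanSpace ℝ (Fin k),
      ContDiff ℝ (⊤ : ℕ∞) (fun q : ℝ × ℝ => f q.1 q.2) →
      Continuous fun q : ℝ × ℝ => ‖f q.1 q.2‖ ^ p := fun f hf =>
    hf.continuous.norm.rpow_const fun _ => Or.inr hp0.le
  have cvt := hcont _ (contDiff_pdt hv)
  have cvs := hcont _ (contDiff_pds hv)
  have cvtt := hcont _ (contDiff_pdt (contDiff_pdt hv))
  have cwt := hcont _ (contDiff_pdt hw)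
  have cwtt := hcont _ (contDiff_pdt (contDiff_pdt hw))
  set a := ∫ s in (-T)..0, ∫ t in (0 : ℝ)..1, ‖pds v s t‖ ^ p with ha
  set b := ∫ s in (-T)..0, ∫ t in (0 : ℝ)..1, ‖pdt (pdt v) s t‖ ^ p with hb
  set c := ∫ s in (-T)..0, ∫ t in (0 : ℝ)..1, ‖pdt (pdt w) s t‖ ^ p with hc
  have ha0 : 0 ≤ a := hnn _
  have hb0 : 0 ≤ b := hnn _
  have hc0 : 0 ≤ c := hnn _
  have hab : ∫ σ in (-T)..0, ∫ t in (0 : ℝ)..1, (‖pds v σ t‖ ^ p + ‖pdt (pdt v) σ t‖ ^ p)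
      = a + b := by
    rw [ha, hb, ← intervalIntegral.integral_add
      ((continuous_slice_integral (F := fun s t => ‖pds v s t‖ ^ p) cvs).intervalIntegrable _ _)
      ((continuous_slice_integral (F := fun s t => ‖pdt (pdt v) s t‖ ^ p) cvtt).intervalIntegrable _ _)]
    congr 1
    ext1 σ
    exact intervalIntegral.integral_add ((continuous_slice (F := fun σ t => ‖pds v σ t‖ ^ p) cvs σ).intervalIntegrable _ _)
      ((continuous_slice (F := fun σ t => ‖pdt (pdt v) σ t‖ ^ p) cvtt σ).intervalIntegrable _ _)
  have cprod : Continuous fun q : ℝ × ℝ => ‖pdt v q.1 q.2‖ ^ p * ‖pdt w q.1 q.2‖ ^ p :=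
    cvt.mul cwt
  have hL : (∫ s in Ioc (-T) 0, ∫ t in Ioc (0 : ℝ) 1, (‖pdt v s t‖ * ‖pdt w s t‖) ^ p) =
      ∫ s in (-T)..0, ∫ t in (0 : ℝ)..1, ‖pdt v s t‖ ^ p * ‖pdt w s t‖ ^ p := by
    simp only [intervalIntegral.integral_of_le zero_le_one, intervalIntegral.integral_of_le hT',
      Real.mul_rpow (norm_nonneg _) (norm_nonneg _)]
  have hle : ∫ s in (-T)..0, ∫ t in (0 : ℝ)..1, ‖pdt v s t‖ ^ p * ‖pdt w s t‖ ^ p ≤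
      K * (a + b) * c := by
    rw [hc, ← intervalIntegral.integral_const_mul]
    refine intervalIntegral.integral_mono_on hT'
      ((continuous_slice_integral
        (F := fun s t => ‖pdt v s t‖ ^ p * ‖pdt w s t‖ ^ p) cprod).intervalIntegrable _ _)
      (((continuous_slice_integral (F := fun s t => ‖pdt (pdt w) s t‖ ^ p) cwtt).intervalIntegrable _ _).const_mul _) fun s hs => ?_
    have hs1 := slice_bound hp hv hvper hvs hs
    rw [hab] at hs1
    calc _ ≤ ∫ t in (0 : ℝ)..1,
          ‖pdt v s t‖ ^ p * ∫ τ in (0 : ℝ)..1, ‖pdt (pdt w) s τ‖ ^ p := by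
          refine intervalIntegral.integral_mono_on zero_le_one
            ((continuous_slice (F := fun s t => ‖pdt v s t‖ ^ p * ‖pdt w s t‖ ^ p) cprod
              s).intervalIntegrable _ _)
            (((continuous_slice (F := fun σ t => ‖pdt v σ t‖ ^ p) cvt s).intervalIntegrable _ _).mul_const _) fun t ht => ?_
          gcongr
          exact norm_pdt_rpow_le (by linarith) hw hwper s ht
      _ = (∫ t in (0 : ℝ)..1, ‖pdt v s t‖ ^ p) *
          ∫ τ in (0 : ℝ)..1, ‖pdt (pdt w) s τ‖ ^ p := intervalIntegral.integral_mul_const _ _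
      _ ≤ _ := by
          gcongr
          exact intervalIntegral.integral_nonneg zero_le_one fun t _ => by positivity
  have hLnn : 0 ≤ ∫ s in (-T)..0, ∫ t in (0 : ℝ)..1, ‖pdt v s t‖ ^ p * ‖pdt w s t‖ ^ p :=
    intervalIntegral.integral_nonneg hT' fun s _ =>
      intervalIntegral.integral_nonneg zero_le_one fun t _ => by positivity
  have hv0 : 0 ≤ LpZ p T v := by rw [LpZ_eq hT]; exact Real.rpow_nonneg (hnn _) _
  have hw0 : 0 ≤ LpZ p T (pdt w) := by rw [LpZ_eq hT]; exact Real.rpow_nonneg (hnn _) _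
  have hadd : (a + b) ^ (1 / p) ≤ a ^ (1 / p) + b ^ (1 / p) :=
    Real.rpow_add_le_add_rpow ha0 hb0 (by positivity)
      (by rw [div_le_one hp0]; linarith)
  rw [hL, LpZ_eq hT (pds v), LpZ_eq hT (pdt (pdt v)), LpZ_eq hT (pdt (pdt w)), ← ha, ← hb, ← hc]
  calc _ ≤ (K * (a + b) * c) ^ (1 / p) := by gcongr
    _ = K ^ (1 / p) * (a + b) ^ (1 / p) * c ^ (1 / p) := by
        rw [Real.mul_rpow (by positivity) hc0, Real.mul_rpow hK.le (by positivity)]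
    _ ≤ _ := by
        gcongr <;> linarith
end

section
/- Let Ω ⊂ ℝ² be open and u ∈ L¹_loc(Ω) satisfy ∫_Ω u (−∂_s φ − ∂_t∂_t φ) = 0 for every φ ∈ C_0^∞(Ω). Then u agrees almost everywhere with a smooth function on Ω which satisfies ∂_s u − ∂_t∂_t u = 0. -/
/-!
The proof uses a parametrix built from the heat kernel `heatK`.

* `heatK` is locally integrable and smooth away from the origin. Near `s = 0`, `t ≠ 0` this rests
  on parabolic homogeneity: there `heatK` is `|t|⁻¹` times a flat function of `s/t²`.
* `heatK` is a fundamental solution, `∫ heatK · (-∂_s - ∂_t²)φ = φ(0)`. After rescaling `t = √s z`,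
  the averages `g(s) = ∫ heatK(s, t) φ(s, t) dt` are averages against a fixed Gaussian; they are
  continuous up to `s = 0` with `g(0) = φ(0)`, and `g'(s) = ∫ heatK (∂_s + ∂_t²)φ dt` for `s > 0`.
* For a cutoff `χ` equal to `1` near the origin, `χ · heatK` is a parametrix: it is a compactly
  supported fundamental solution up to a smooth compactly supported error `η`
  (`exists_parametrix`).

Given `p ∈ Ω`, take `χ` with small support and a test function `φ` supported near `p`. Then
`ψ(x) = ∫ χ heatK (y) φ(x + y) dy` is an admissible test function and
`(-∂_s - ∂_t²)ψ (x) = φ(x) - ∫ η(y) φ(x + y) dy`, so that `∫ u φ = ∫ (u₀ ⋆ η) φ` for a truncation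
`u₀` of `u`. Hence `u = u₀ ⋆ η` almost everywhere near `p` (`exists_local_smooth`). These local
smooth representatives agree on overlaps, and integrating by parts turns the weak equation into the
classical one (`heat_of_weak`).
-/

open MeasureTheory Set

/-- Partial derivative in the time variable `s` (first coordinate). -/
noncomputable def dS (u : ℝ × ℝ → ℝ) : ℝ × ℝ → ℝ :=
  fun p => deriv (fun σ => u (σ, p.2)) p.1

/-- Partial derivative in the space variable `t` (second coordinate). -/
noncomputable def dT (u : ℝ × ℝ → ℝ) : ℝ × ℝ → ℝ :=
  fun p => deriv (fun τ => u (p.1, τ)) p.2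

namespace ParabolicWeyl

open Filter Topology Polynomial
open scoped ContDiff Convolution

/-! ### Partial derivatives of smooth functions of two variables -/

lemma dS_eq {f : ℝ × ℝ → ℝ} {p : ℝ × ℝ} (hf : DifferentiableAt ℝ f p) :
    dS f p = fderiv ℝ f p (1, 0) := by
  have h1 : HasDerivAt (fun σ : ℝ => ((σ, p.2) : ℝ × ℝ)) (1, 0) p.1 :=
    (hasDerivAt_id p.1).prodMk (hasDerivAt_const _ _)
  exact (HasFDerivAt.comp_hasDerivAt (x := p.1) (l := f) (f := fun σ : ℝ => ((σ, p.2) : ℝ × ℝ))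
    hf.hasFDerivAt h1).deriv

lemma dT_eq {f : ℝ × ℝ → ℝ} {p : ℝ × ℝ} (hf : DifferentiableAt ℝ f p) :
    dT f p = fderiv ℝ f p (0, 1) := by
  have h1 : HasDerivAt (fun σ : ℝ => ((p.1, σ) : ℝ × ℝ)) (0, 1) p.2 :=
    (hasDerivAt_const _ _).prodMk (hasDerivAt_id p.2)
  exact (HasFDerivAt.comp_hasDerivAt (x := p.2) (l := f) (f := fun σ : ℝ => ((p.1, σ) : ℝ × ℝ))
    hf.hasFDerivAt h1).deriv

lemma diff_of_smooth {f : ℝ × ℝ → ℝ} (hf : ContDiff ℝ ∞ f) : Differentiable ℝ f :=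
  hf.differentiable (by simp)

lemma dS_eq_fun {f : ℝ × ℝ → ℝ} (hf : ContDiff ℝ ∞ f) :
    dS f = fun p => fderiv ℝ f p (1, 0) :=
  funext fun p => dS_eq (diff_of_smooth hf p)

lemma dT_eq_fun {f : ℝ × ℝ → ℝ} (hf : ContDiff ℝ ∞ f) :
    dT f = fun p => fderiv ℝ f p (0, 1) :=
  funext fun p => dT_eq (diff_of_smooth hf p)

lemma contDiff_dS {f : ℝ × ℝ → ℝ} (hf : ContDiff ℝ ∞ f) : ContDiff ℝ ∞ (dS f) := by
  rw [dS_eq_fun hf]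
  exact (hf.fderiv_right (m := ∞) (by simp)).clm_apply contDiff_const

lemma contDiff_dT {f : ℝ × ℝ → ℝ} (hf : ContDiff ℝ ∞ f) : ContDiff ℝ ∞ (dT f) := by
  rw [dT_eq_fun hf]
  exact (hf.fderiv_right (m := ∞) (by simp)).clm_apply contDiff_const

lemma dS_congr {f g : ℝ × ℝ → ℝ} {p : ℝ × ℝ} (h : f =ᶠ[𝓝 p] g) : dS f p = dS g p := by
  have : Tendsto (fun σ : ℝ => ((σ, p.2) : ℝ × ℝ)) (𝓝 p.1) (𝓝 p) :=
    (Continuous.prodMk_left p.2).tendsto p.1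
  exact Filter.EventuallyEq.deriv_eq (this.eventually h)

lemma dT_congr {f g : ℝ × ℝ → ℝ} {p : ℝ × ℝ} (h : f =ᶠ[𝓝 p] g) : dT f p = dT g p := by
  have : Tendsto (fun σ : ℝ => ((p.1, σ) : ℝ × ℝ)) (𝓝 p.2) (𝓝 p) :=
    (Continuous.prodMk_right p.1).tendsto p.2
  exact Filter.EventuallyEq.deriv_eq (this.eventually h)

lemma dS_eventually_congr {f g : ℝ × ℝ → ℝ} {p : ℝ × ℝ} (h : f =ᶠ[𝓝 p] g) :
    dS f =ᶠ[𝓝 p] dS g :=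
  h.eventuallyEq_nhds.mono fun _ hq => dS_congr hq

lemma dT_eventually_congr {f g : ℝ × ℝ → ℝ} {p : ℝ × ℝ} (h : f =ᶠ[𝓝 p] g) :
    dT f =ᶠ[𝓝 p] dT g :=
  h.eventuallyEq_nhds.mono fun _ hq => dT_congr hq

lemma dS_const (c : ℝ) : dS (fun _ => c) = 0 := by ext p; simp [dS]

lemma dT_const (c : ℝ) : dT (fun _ => c) = 0 := by ext p; simp [dT]

lemma tsupport_dS_subset (f : ℝ × ℝ → ℝ) : tsupport (dS f) ⊆ tsupport f := by
  intro p hp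
  by_contra h
  rw [notMem_tsupport_iff_eventuallyEq] at h
  refine (notMem_tsupport_iff_eventuallyEq.2 ?_) hp
  have := dS_eventually_congr (g := fun _ => 0) h
  rwa [dS_const] at this

lemma tsupport_dT_subset (f : ℝ × ℝ → ℝ) : tsupport (dT f) ⊆ tsupport f := by
  intro p hp
  by_contra h
  rw [notMem_tsupport_iff_eventuallyEq] at h
  refine (notMem_tsupport_iff_eventuallyEq.2 ?_) hp
  have := dT_eventually_congr (g := fun _ => 0) h
  rwa [dT_const] at this

lemma compact_dS {f : ℝ × ℝ → ℝ} (hf : HasCompactSupport f) : HasCompactSupport (dS f) :=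
  hf.of_isClosed_subset (isClosed_tsupport _) (tsupport_dS_subset f)

lemma compact_dT {f : ℝ × ℝ → ℝ} (hf : HasCompactSupport f) : HasCompactSupport (dT f) :=
  hf.of_isClosed_subset (isClosed_tsupport _) (tsupport_dT_subset f)

lemma hasDerivAt_dS {f : ℝ × ℝ → ℝ} (hf : ContDiff ℝ ∞ f) (p : ℝ × ℝ) :
    HasDerivAt (fun σ => f (σ, p.2)) (dS f p) p.1 := by
  have h : DifferentiableAt ℝ (fun σ => f (σ, p.2)) p.1 :=
    DifferentiableAt.comp (g := f) (f := fun σ : ℝ => ((σ, p.2) : ℝ × ℝ)) p.1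
      (diff_of_smooth hf _) (by fun_prop)
  exact h.hasDerivAt

lemma hasDerivAt_dT {f : ℝ × ℝ → ℝ} (hf : ContDiff ℝ ∞ f) (p : ℝ × ℝ) :
    HasDerivAt (fun τ => f (p.1, τ)) (dT f p) p.2 := by
  have h : DifferentiableAt ℝ (fun τ => f (p.1, τ)) p.2 :=
    DifferentiableAt.comp (g := f) (f := fun σ : ℝ => ((p.1, σ) : ℝ × ℝ)) p.2
      (diff_of_smooth hf _) (by fun_prop)
  exact h.hasDerivAt

lemma dS_mul {f g : ℝ × ℝ → ℝ} (hf : ContDiff ℝ ∞ f) (hg : ContDiff ℝ ∞ g) :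
    dS (fun p => f p * g p) = fun p => dS f p * g p + f p * dS g p :=
  funext fun p => ((hasDerivAt_dS hf p).mul (hasDerivAt_dS hg p)).deriv

lemma dT_mul {f g : ℝ × ℝ → ℝ} (hf : ContDiff ℝ ∞ f) (hg : ContDiff ℝ ∞ g) :
    dT (fun p => f p * g p) = fun p => dT f p * g p + f p * dT g p :=
  funext fun p => ((hasDerivAt_dT hf p).mul (hasDerivAt_dT hg p)).deriv

lemma dT_add {f g : ℝ × ℝ → ℝ} (hf : ContDiff ℝ ∞ f) (hg : ContDiff ℝ ∞ g) :
    dT (fun p => f p + g p) = fun p => dT f p + dT g p :=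
  funext fun p => ((hasDerivAt_dT hf p).add (hasDerivAt_dT hg p)).deriv

lemma dS_translate (f : ℝ × ℝ → ℝ) (a : ℝ × ℝ) :
    dS (fun p => f (a + p)) = fun p => dS f (a + p) := by
  ext p
  exact deriv_comp_const_add (f := fun σ => f (σ, a.2 + p.2)) a.1 p.1

lemma dT_translate (f : ℝ × ℝ → ℝ) (a : ℝ × ℝ) :
    dT (fun p => f (a + p)) = fun p => dT f (a + p) := by
  ext p
  exact deriv_comp_const_add (f := fun σ => f (a.1 + p.1, σ)) a.2 p.2

/-- Integration by parts in the time variable. -/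
lemma integral_mul_dS {f g : ℝ × ℝ → ℝ} (hf : ContDiff ℝ ∞ f) (hg : ContDiff ℝ ∞ g)
    (hc : HasCompactSupport g) : ∫ p, f p * dS g p = - ∫ p, dS f p * g p := by
  have e := contDiff_dS hf
  have e' := contDiff_dS hg
  have c' := compact_dS hc
  have i1 : Integrable (fun p => dS f p * g p) :=
    (e.continuous.mul hg.continuous).integrable_of_hasCompactSupport (hc.mul_left)
  have i2 : Integrable (fun p => f p * dS g p) :=
    (hf.continuous.mul e'.continuous).integrable_of_hasCompactSupport (c'.mul_left)
  have i3 : Integrable (fun p => f p * g p) :=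
    (hf.continuous.mul hg.continuous).integrable_of_hasCompactSupport (hc.mul_left)
  rw [dS_eq_fun hf] at i1 ⊢
  rw [dS_eq_fun hg] at i2 ⊢
  exact integral_mul_fderiv_eq_neg_fderiv_mul_of_integrable i1 i2 i3
    (fun x _ => diff_of_smooth hf x) (fun x _ => diff_of_smooth hg x)

/-- Integration by parts in the space variable. -/
lemma integral_mul_dT {f g : ℝ × ℝ → ℝ} (hf : ContDiff ℝ ∞ f) (hg : ContDiff ℝ ∞ g)
    (hc : HasCompactSupport g) : ∫ p, f p * dT g p = - ∫ p, dT f p * g p := by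
  have e := contDiff_dT hf
  have e' := contDiff_dT hg
  have c' := compact_dT hc
  have i1 : Integrable (fun p => dT f p * g p) :=
    (e.continuous.mul hg.continuous).integrable_of_hasCompactSupport (hc.mul_left)
  have i2 : Integrable (fun p => f p * dT g p) :=
    (hf.continuous.mul e'.continuous).integrable_of_hasCompactSupport (c'.mul_left)
  have i3 : Integrable (fun p => f p * g p) :=
    (hf.continuous.mul hg.continuous).integrable_of_hasCompactSupport (hc.mul_left)
  rw [dT_eq_fun hf] at i1 ⊢
  rw [dT_eq_fun hg] at i2 ⊢
  exact integral_mul_fderiv_eq_neg_fderiv_mul_of_integrable i1 i2 i3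
    (fun x _ => diff_of_smooth hf x) (fun x _ => diff_of_smooth hg x)

/-- The formal adjoint `-∂_s - ∂_t²` of the heat operator. -/
noncomputable def adj (φ : ℝ × ℝ → ℝ) : ℝ × ℝ → ℝ := fun p => -(dS φ p) - dT (dT φ) p

lemma contDiff_adj {f : ℝ × ℝ → ℝ} (hf : ContDiff ℝ ∞ f) : ContDiff ℝ ∞ (adj f) :=
  (contDiff_dS hf).neg.sub (contDiff_dT (contDiff_dT hf))

lemma tsupport_adj_subset (f : ℝ × ℝ → ℝ) : tsupport (adj f) ⊆ tsupport f := by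
  refine (tsupport_sub _ _).trans (union_subset ?_ ?_)
  · exact (closure_mono (Function.support_neg (dS f)).subset).trans (tsupport_dS_subset f)
  · exact (tsupport_dT_subset _).trans (tsupport_dT_subset f)

lemma compact_adj {f : ℝ × ℝ → ℝ} (hf : HasCompactSupport f) : HasCompactSupport (adj f) :=
  hf.of_isClosed_subset (isClosed_tsupport _) (tsupport_adj_subset f)

lemma adj_translate (f : ℝ × ℝ → ℝ) (a : ℝ × ℝ) :
    adj (fun p => f (a + p)) = fun p => adj f (a + p) := by
  ext p
  simp only [adj, dS_translate, dT_translate]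

lemma adj_mul {f g : ℝ × ℝ → ℝ} (hf : ContDiff ℝ ∞ f) (hg : ContDiff ℝ ∞ g) (p : ℝ × ℝ) :
    adj (fun p => f p * g p) p
      = f p * adj g p + adj f p * g p - 2 * (dT f p * dT g p) := by
  have e1 := contDiff_dT hf
  have e2 := contDiff_dT hg
  simp only [adj, dS_mul hf hg, dT_mul hf hg]
  rw [dT_add (e1.mul hg) (hf.mul e2), dT_mul e1 hg, dT_mul hf e2]
  ring

/-- A smooth function which solves the heat equation weakly on an open set solves it there
classically. -/
lemma heat_of_weak {w : ℝ × ℝ → ℝ} (hw : ContDiff ℝ ∞ w) {U : Set (ℝ × ℝ)} (hU : IsOpen U)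
    (h : ∀ φ : ℝ × ℝ → ℝ, ContDiff ℝ ∞ φ → HasCompactSupport φ → tsupport φ ⊆ U →
      ∫ p, w p * adj φ p = 0) : ∀ p ∈ U, dS w p - dT (dT w) p = 0 := by
  have hs := contDiff_dS hw
  have ht := contDiff_dT hw
  have htt := contDiff_dT ht
  have hc : Continuous (fun p => dS w p - dT (dT w) p) := hs.continuous.sub htt.continuous
  have key : ∀ᵐ p, p ∈ U → dS w p - dT (dT w) p = 0 := by
    refine hU.ae_eq_zero_of_integral_contDiff_smul_eq_zero
      (hc.locallyIntegrable.locallyIntegrableOn _) fun φ hφ hφc hφU => ?_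
    have e := h φ hφ hφc hφU
    have c0 : ∀ {f g : ℝ × ℝ → ℝ}, ContDiff ℝ ∞ f → ContDiff ℝ ∞ g → HasCompactSupport g →
        Integrable (fun p => f p * g p) := fun hf hg hgc =>
      (hf.continuous.mul hg.continuous).integrable_of_hasCompactSupport hgc.mul_left
    have hφt := contDiff_dT hφ
    have i1 := integral_mul_dS hw hφ hφc
    have i2 := integral_mul_dT hw hφt (compact_dT hφc)
    have i3 := integral_mul_dT ht hφ hφc
    have e2 : ∫ p, w p * adj φ p = -(∫ p, w p * dS φ p) - ∫ p, w p * dT (dT φ) p := by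
      rw [← integral_neg, ← integral_sub]
      · congr 1; ext p; simp only [adj]; ring
      · exact (c0 hw (contDiff_dS hφ) (compact_dS hφc)).neg
      · exact c0 hw (contDiff_dT hφt) (compact_dT (compact_dT hφc))
    have e3 : ∫ p, φ p • (dS w p - dT (dT w) p)
        = (∫ p, dS w p * φ p) - ∫ p, dT (dT w) p * φ p := by
      rw [← integral_sub (c0 hs hφ hφc) (c0 htt hφ hφc)]
      congr 1; ext p; simp only [smul_eq_mul]; ring
    linarith
  have := Measure.eqOn_open_of_ae_eq (μ := volume) (U := U)
    (f := fun p => dS w p - dT (dT w) p) (g := fun _ => 0)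
    ((ae_restrict_iff' hU.measurableSet).2 key) hU hc.continuousOn continuousOn_const
  exact fun p hp => this hp

/-! ### The heat kernel and its smoothness away from the origin -/

/-- The heat kernel `(4πs)^{-1/2} exp(-t²/(4s))`. No case distinction is needed for `s ≤ 0`:
there `√(4πs) = 0`, so that the formula evaluates to `0`. -/
noncomputable def heatK (p : ℝ × ℝ) : ℝ :=
  (√(4 * Real.pi * p.1))⁻¹ * Real.exp (-p.2 ^ 2 / (4 * p.1))

lemma heatK_of_nonpos {p : ℝ × ℝ} (hp : p.1 ≤ 0) : heatK p = 0 := by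
  have : 4 * Real.pi * p.1 ≤ 0 := mul_nonpos_of_nonneg_of_nonpos (by positivity) hp
  simp [heatK, Real.sqrt_eq_zero_of_nonpos this]

lemma heatK_nonneg (p : ℝ × ℝ) : 0 ≤ heatK p := by
  unfold heatK; positivity

lemma measurable_heatK : Measurable heatK := by
  unfold heatK
  fun_prop

lemma sqrt_glue_hasDerivAt (p : ℝ[X]) (x : ℝ) :
    HasDerivAt (fun x ↦ p.eval x⁻¹ * expNegInvGlue x * √x)
      ((X ^ 2 * (p - derivative (R := ℝ) p) + C (1 / 2) * X * p).eval x⁻¹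
        * expNegInvGlue x * √x) x := by
  rcases lt_trichotomy x 0 with hx | rfl | hx
  · rw [expNegInvGlue.zero_of_nonpos hx.le, mul_zero, zero_mul]
    refine (hasDerivAt_const _ 0).congr_of_eventuallyEq ?_
    filter_upwards [gt_mem_nhds hx] with y hy
    rw [expNegInvGlue.zero_of_nonpos hy.le, mul_zero, zero_mul]
  · rw [expNegInvGlue.zero, mul_zero, zero_mul, hasDerivAt_iff_tendsto_slope]
    have h1 := ((expNegInvGlue.tendsto_polynomial_inv_mul_zero (p * X)).mul
      (Real.continuous_sqrt.tendsto 0)).mono_left (inf_le_left (b := 𝓟 {(0 : ℝ)}ᶜ))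
    simp only [Real.sqrt_zero, mul_zero] at h1
    refine h1.congr fun x ↦ ?_
    simp [slope_def_field, div_eq_mul_inv]
    ring
  · have h1 := (expNegInvGlue.hasDerivAt_polynomial_eval_inv_mul p x).mul
      (Real.hasDerivAt_sqrt hx.ne')
    convert! h1 using 1
    have h2 : 1 / (2 * √x) = 1 / 2 * x⁻¹ * √x := by
      have : √x ≠ 0 := (Real.sqrt_pos.2 hx).ne'
      have h3 := Real.mul_self_sqrt hx.le
      field_simp
      nlinarith
    rw [h2]
    simp
    ring

/-- The profile `x ↦ p(1/x) √x exp(-1/x)` on `x > 0`, extended by zero, is smooth for every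
polynomial `p`, because differentiating it only changes the polynomial. -/
lemma sqrt_glue_contDiff {n : ℕ∞} (p : ℝ[X]) :
    ContDiff ℝ n (fun x ↦ p.eval x⁻¹ * expNegInvGlue x * √x) := by
  have hd : ∀ p : ℝ[X], Differentiable ℝ (fun x ↦ p.eval x⁻¹ * expNegInvGlue x * √x) :=
    fun p x => (sqrt_glue_hasDerivAt p x).differentiableAt
  apply contDiff_all_iff_nat.2 (fun m => ?_) n
  induction m generalizing p with
  | zero => exact contDiff_zero.2 (hd p).continuous
  | succ m ihm =>
    rw [show ((m + 1 : ℕ) : WithTop ℕ∞) = m + 1 from rfl]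
    refine contDiff_succ_iff_deriv.2 ⟨hd p, by simp, ?_⟩
    convert! ihm (X ^ 2 * (p - derivative (R := ℝ) p) + C (1 / 2) * X * p) using 2
    exact (sqrt_glue_hasDerivAt p _).deriv

/-- Parabolic homogeneity: off the axis `t = 0`, the heat kernel is `|t|⁻¹` times a smooth
function of the single variable `4s/t²`. -/
lemma heatK_eq_glue {p : ℝ × ℝ} (hp : p.2 ≠ 0) :
    heatK p = (√(Real.pi * p.2 ^ 2))⁻¹ *
      ((X : ℝ[X]).eval (4 * p.1 / p.2 ^ 2)⁻¹ * expNegInvGlue (4 * p.1 / p.2 ^ 2)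
        * √(4 * p.1 / p.2 ^ 2)) := by
  have ht : 0 < p.2 ^ 2 := by positivity
  rcases le_or_gt p.1 0 with h | h
  · have : 4 * p.1 / p.2 ^ 2 ≤ 0 := div_nonpos_of_nonpos_of_nonneg (by linarith) ht.le
    rw [heatK_of_nonpos h, expNegInvGlue.zero_of_nonpos this]
    simp
  · have hx : 0 < 4 * p.1 / p.2 ^ 2 := by positivity
    have e1 : 4 * Real.pi * p.1 = (Real.pi * p.2 ^ 2) * (4 * p.1 / p.2 ^ 2) := by
      field_simp
    have e2 : -p.2 ^ 2 / (4 * p.1) = -(4 * p.1 / p.2 ^ 2)⁻¹ := by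
      field_simp
    rw [heatK, e1, e2, Real.sqrt_mul (by positivity), expNegInvGlue, if_neg hx.not_ge, eval_X]
    generalize 4 * p.1 / p.2 ^ 2 = x at hx
    have h3 : (√x)⁻¹ = x⁻¹ * √x := by
      have : √x ≠ 0 := (Real.sqrt_pos.2 hx).ne'
      have h3 := Real.mul_self_sqrt hx.le
      field_simp
      nlinarith
    rw [mul_inv, h3]
    ring

lemma contDiffAt_heatK {p : ℝ × ℝ} (hp : p ≠ 0) : ContDiffAt ℝ ∞ heatK p := by
  by_cases ht : p.2 = 0
  · have hs : p.1 ≠ 0 := fun h => hp (Prod.ext h ht)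
    rcases lt_or_gt_of_ne hs with h | h
    · have : heatK =ᶠ[𝓝 p] fun _ => 0 := by
        filter_upwards [continuous_fst.continuousAt.eventually (gt_mem_nhds h)] with q hq
        exact heatK_of_nonpos hq.le
      exact contDiffAt_const.congr_of_eventuallyEq this
    · have h1 : (4 * Real.pi * p.1) ≠ 0 := by positivity
      have h2 : √(4 * Real.pi * p.1) ≠ 0 := by positivity
      have h3 : 4 * p.1 ≠ 0 := by positivity
      unfold heatK
      refine ContDiffAt.mul (ContDiffAt.inv (ContDiffAt.sqrt (by fun_prop) h1) h2) ?_
      have h4 : ContDiffAt ℝ ∞ (fun q : ℝ × ℝ => -q.2 ^ 2 / (4 * q.1)) p :=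
        ContDiffAt.div (by fun_prop) (by fun_prop) h3
      exact h4.exp
  · have hev : ∀ᶠ q : ℝ × ℝ in 𝓝 p, q.2 ≠ 0 :=
      continuous_snd.continuousAt.eventually (isOpen_ne.mem_nhds ht)
    have h1 : (Real.pi * p.2 ^ 2) ≠ 0 := by positivity
    have h2 : √(Real.pi * p.2 ^ 2) ≠ 0 := by positivity
    have h3 : p.2 ^ 2 ≠ 0 := by positivity
    refine ContDiffAt.congr_of_eventuallyEq ?_ (hev.mono fun q hq => heatK_eq_glue hq)
    refine ContDiffAt.mul (ContDiffAt.inv (ContDiffAt.sqrt (by fun_prop) h1) h2) ?_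
    exact ContDiffAt.comp (g := fun x ↦ (X : ℝ[X]).eval x⁻¹ * expNegInvGlue x * √x)
      (f := fun q : ℝ × ℝ => 4 * q.1 / q.2 ^ 2) p
      (sqrt_glue_contDiff (n := ⊤) X).contDiffAt
      (ContDiffAt.div (by fun_prop) (by fun_prop) h3)

/-- Multiplication by a smooth function vanishing near the origin removes the singularity of the
heat kernel. -/
lemma contDiff_heatK_mul {f : ℝ × ℝ → ℝ} (hf : ContDiff ℝ ∞ f) (h0 : f =ᶠ[𝓝 0] fun _ => 0) :
    ContDiff ℝ ∞ (fun p => heatK p * f p) := by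
  rw [contDiff_iff_contDiffAt]
  intro p
  by_cases hp : p = 0
  · subst hp
    refine (contDiffAt_const (c := (0 : ℝ))).congr_of_eventuallyEq (h0.mono fun q hq => ?_)
    simp [hq]
  · exact (contDiffAt_heatK hp).mul hf.contDiffAt

/-! ### The heat kernel as a fundamental solution -/

lemma heatK_one (z : ℝ) : heatK (1, z) = (√(4 * Real.pi))⁻¹ * Real.exp (-(1 / 4) * z ^ 2) := by
  simp only [heatK]
  rw [mul_one, show -z ^ 2 / (4 * 1) = -(1 / 4) * z ^ 2 by ring]

lemma integrable_heatK_one : Integrable (fun z : ℝ => heatK (1, z)) := by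
  simp_rw [heatK_one]
  exact (integrable_exp_neg_mul_sq (by norm_num)).const_mul _

lemma integral_heatK_one : ∫ z : ℝ, heatK (1, z) = 1 := by
  simp_rw [heatK_one]
  rw [integral_const_mul, integral_gaussian]
  rw [show Real.pi / (1 / 4) = 4 * Real.pi by ring]
  exact inv_mul_cancel₀ (by positivity)

lemma integrable_id_mul_heatK_one : Integrable (fun z : ℝ => z * heatK (1, z)) := by
  simp_rw [heatK_one]
  refine ((integrable_mul_exp_neg_mul_sq (b := 1 / 4) (by norm_num)).const_mul
    (√(4 * Real.pi))⁻¹).congr (ae_of_all _ fun z => ?_)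
  simp only; ring

lemma hasDerivAt_heatK_one (z : ℝ) :
    HasDerivAt (fun z : ℝ => heatK (1, z)) (-(z / 2) * heatK (1, z)) z := by
  simp_rw [heatK_one]
  have h := (((hasDerivAt_pow 2 z).const_mul (-(1 / 4 : ℝ))).exp).const_mul (√(4 * Real.pi))⁻¹
  refine h.congr_deriv ?_
  simp; ring

lemma heatK_scale {s : ℝ} (hs : 0 < s) (z : ℝ) :
    heatK (s, √s * z) = (√s)⁻¹ * heatK (1, z) := by
  have e : -(√s * z) ^ 2 / (4 * s) = -z ^ 2 / (4 * 1) := by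
    rw [mul_pow, Real.sq_sqrt hs.le]; field_simp
  simp only [heatK]
  rw [e, Real.sqrt_mul (by positivity) s, mul_one, mul_inv]
  ring_nf

/-- Parabolic rescaling turns integration against the time-`s` kernel into integration against a
fixed Gaussian. -/
lemma integral_heatK_mul {s : ℝ} (hs : 0 < s) (f : ℝ → ℝ) :
    ∫ t, heatK (s, t) * f t = ∫ z, heatK (1, z) * f (√s * z) := by
  have hq : 0 < √s := Real.sqrt_pos.2 hs
  have h := Measure.integral_comp_mul_left (fun t => heatK (s, t) * f t) (√s)
  simp only [heatK_scale hs] at h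
  rw [abs_of_pos (inv_pos.2 hq), smul_eq_mul] at h
  simp_rw [mul_assoc] at h
  rw [integral_const_mul] at h
  exact (mul_left_cancel₀ (inv_ne_zero hq.ne') h).symm

lemma integrable_heatK_slice (s : ℝ) : Integrable (fun t : ℝ => heatK (s, t)) := by
  rcases le_or_gt s 0 with hs | hs
  · simp [heatK_of_nonpos (p := (s, _)) hs]
  · have : ∀ t, heatK (s, t) = (√(4 * Real.pi * s))⁻¹ * Real.exp (-(1 / (4 * s)) * t ^ 2) := by
      intro t
      simp only [heatK]
      rw [show -t ^ 2 / (4 * s) = -(1 / (4 * s)) * t ^ 2 by field_simp]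
    simp_rw [this]
    exact (integrable_exp_neg_mul_sq (by positivity)).const_mul _

lemma integral_heatK_slice_le (s : ℝ) : ∫ t, heatK (s, t) ≤ 1 := by
  rcases le_or_gt s 0 with hs | hs
  · simp [heatK_of_nonpos (p := (s, _)) hs]
  · have := integral_heatK_mul hs (fun _ => 1)
    simp only [mul_one] at this
    rw [this, integral_heatK_one]

lemma locallyIntegrable_heatK : LocallyIntegrable heatK := by
  rw [locallyIntegrable_iff]
  intro K hK
  obtain ⟨M, hM⟩ := hK.isBounded.subset_closedBall 0
  have hsub : K ⊆ Icc (-M) M ×ˢ univ := by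
    intro p hp
    have := hM hp
    rw [mem_closedBall_zero_iff, Prod.norm_def, sup_le_iff, Real.norm_eq_abs, abs_le] at this
    exact ⟨this.1, mem_univ _⟩
  refine IntegrableOn.mono_set ?_ hsub
  rw [IntegrableOn, Measure.volume_eq_prod, ← Measure.prod_restrict, Measure.restrict_univ]
  have hm := measurable_heatK.aestronglyMeasurable
    (μ := ((volume : Measure ℝ).restrict (Icc (-M) M)).prod (volume : Measure ℝ))
  rw [integrable_prod_iff hm]
  refine ⟨ae_of_all _ fun s => integrable_heatK_slice s, ?_⟩
  have hfin : IsFiniteMeasure ((volume : Measure ℝ).restrict (Icc (-M) M)) :=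
    ⟨by rw [Measure.restrict_apply_univ]; exact measure_Icc_lt_top⟩
  refine Integrable.of_bound hm.norm.integral_prod_right' 1 (ae_of_all _ fun s => ?_)
  simp only [Real.norm_of_nonneg (heatK_nonneg _)]
  rw [Real.norm_of_nonneg (integral_nonneg fun t => heatK_nonneg _)]
  exact integral_heatK_slice_le s

lemma hasDerivAt_curve {φ : ℝ × ℝ → ℝ} (hφ : ContDiff ℝ ∞ φ) {σ : ℝ} (hσ : 0 < σ) (z : ℝ) :
    HasDerivAt (fun σ => φ (σ, √σ * z))
      (dS φ (σ, √σ * z) + z / (2 * √σ) * dT φ (σ, √σ * z)) σ := by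
  have h1 : HasDerivAt (fun σ : ℝ => ((σ, √σ * z) : ℝ × ℝ)) (1, 1 / (2 * √σ) * z) σ :=
    (hasDerivAt_id σ).prodMk ((Real.hasDerivAt_sqrt hσ.ne').mul_const z)
  have h2 := HasFDerivAt.comp_hasDerivAt (x := σ) (l := φ)
    (f := fun σ : ℝ => ((σ, √σ * z) : ℝ × ℝ)) (diff_of_smooth hφ _).hasFDerivAt h1
  refine h2.congr_deriv ?_
  rw [dS_eq (diff_of_smooth hφ _), dT_eq (diff_of_smooth hφ _)]
  have : ((1, 1 / (2 * √σ) * z) : ℝ × ℝ) = (1, 0) + (z / (2 * √σ)) • (0, 1) := by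
    ext
    · simp
    · simp; ring
  rw [this, map_add, map_smul, smul_eq_mul]

/-- Integration by parts against the Gaussian, in the rescaled space variable. -/
lemma gaussian_by_parts {φ : ℝ × ℝ → ℝ} (hφ : ContDiff ℝ ∞ φ) (hc : HasCompactSupport φ)
    {s : ℝ} (hs : 0 < s) :
    ∫ z, heatK (1, z) * (z / (2 * √s) * φ (s, √s * z))
      = ∫ z, heatK (1, z) * dT φ (s, √s * z) := by
  have hq : 0 < √s := Real.sqrt_pos.2 hs
  obtain ⟨C, hC⟩ := hc.exists_bound_of_continuous hφ.continuous
  obtain ⟨D, hD⟩ := (compact_dT hc).exists_bound_of_continuous (contDiff_dT hφ).continuous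
  have cφ : Continuous fun z : ℝ => φ (s, √s * z) := hφ.continuous.comp (by fun_prop)
  have cφ' : Continuous fun z : ℝ => dT φ (s, √s * z) :=
    (contDiff_dT hφ).continuous.comp (by fun_prop)
  have hv : ∀ z : ℝ, HasDerivAt (fun z => φ (s, √s * z)) (√s * dT φ (s, √s * z)) z := by
    intro z
    have h1 := HasDerivAt.comp (h₂ := fun τ => φ (s, τ)) (h := fun z => √s * z) z
      (hasDerivAt_dT hφ (s, √s * z)) ((hasDerivAt_id z).const_mul (√s))
    refine h1.congr_deriv ?_
    ring
  have i1 : Integrable (fun z : ℝ => heatK (1, z) * φ (s, √s * z)) :=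
    integrable_heatK_one.mul_bdd cφ.aestronglyMeasurable (ae_of_all _ fun z => hC _)
  have i2 : Integrable (fun z : ℝ => heatK (1, z) * (√s * dT φ (s, √s * z))) := by
    have := (integrable_heatK_one.mul_bdd cφ'.aestronglyMeasurable
      (ae_of_all _ fun z => hD _)).const_mul (√s)
    refine this.congr (ae_of_all _ fun z => ?_)
    simp only; ring
  have i3 : Integrable (fun z : ℝ => -(z / 2) * heatK (1, z) * φ (s, √s * z)) := by
    have := (integrable_id_mul_heatK_one.mul_bdd cφ.aestronglyMeasurable
      (ae_of_all _ fun z => hC _)).const_mul (-(1 / 2))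
    refine this.congr (ae_of_all _ fun z => ?_)
    simp only; ring
  have key := integral_mul_deriv_eq_deriv_mul_of_integrable (u := fun z : ℝ => heatK (1, z))
    (v := fun z => φ (s, √s * z)) (fun z _ => hasDerivAt_heatK_one z) (fun z _ => hv z) i2 i3 i1
  have e1 : ∫ z, heatK (1, z) * (√s * dT φ (s, √s * z))
      = √s * ∫ z, heatK (1, z) * dT φ (s, √s * z) := by
    rw [← integral_const_mul]; congr 1; ext z; ring
  have e2 : -∫ z, -(z / 2) * heatK (1, z) * φ (s, √s * z)
      = √s * ∫ z, heatK (1, z) * (z / (2 * √s) * φ (s, √s * z)) := by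
    rw [← integral_const_mul, ← integral_neg]
    congr 1; ext z
    field_simp
  rw [e1, e2] at key
  exact (mul_left_cancel₀ hq.ne' key).symm

/-- The Gaussian averages `g(s) = ∫ heatK(1,z) φ(s, √s z) dz = ∫ heatK(s,t) φ(s,t) dt`
satisfy `g'(s) = -∫ heatK(s,t) (adj φ)(s,t) dt` for `s > 0`. -/
lemma hasDerivAt_average {φ : ℝ × ℝ → ℝ} (hφ : ContDiff ℝ ∞ φ) (hc : HasCompactSupport φ)
    {s : ℝ} (hs : 0 < s) :
    HasDerivAt (fun s => ∫ z, heatK (1, z) * φ (s, √s * z))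
      (-∫ t, heatK (s, t) * adj φ (s, t)) s := by
  have hS := contDiff_dS hφ
  have hT := contDiff_dT hφ
  have hTT := contDiff_dT hT
  obtain ⟨B, hB⟩ := hc.exists_bound_of_continuous hφ.continuous
  obtain ⟨C, hC⟩ := (compact_dS hc).exists_bound_of_continuous hS.continuous
  obtain ⟨D, hD⟩ := (compact_dT hc).exists_bound_of_continuous hT.continuous
  obtain ⟨E, hE⟩ := (compact_dT (compact_dT hc)).exists_bound_of_continuous hTT.continuous
  have hm : AEStronglyMeasurable (fun z : ℝ => heatK (1, z)) := integrable_heatK_one.1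
  have cc : ∀ {f : ℝ × ℝ → ℝ} (σ : ℝ), ContDiff ℝ ∞ f →
      AEStronglyMeasurable (fun z : ℝ => f (σ, √σ * z)) := fun σ hf =>
    (hf.continuous.comp (by fun_prop : Continuous fun z : ℝ => ((σ, √σ * z) : ℝ × ℝ)))
      |>.aestronglyMeasurable
  have hd0 : 0 ≤ D := (norm_nonneg _).trans (hD 0)
  have hder := (hasDerivAt_integral_of_dominated_loc_of_deriv_le (μ := volume)
    (s := Ioi (s / 2)) (x₀ := s)
    (F := fun σ z => heatK (1, z) * φ (σ, √σ * z))
    (F' := fun σ z => heatK (1, z) *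
      (dS φ (σ, √σ * z) + z / (2 * √σ) * dT φ (σ, √σ * z)))
    (bound := fun z => heatK (1, z) * C + |z * heatK (1, z)| * (D / (2 * √(s / 2))))
    (Ioi_mem_nhds (by linarith)) (Eventually.of_forall fun σ => hm.mul (cc σ hφ))
    (integrable_heatK_one.mul_bdd (cc s hφ) (ae_of_all _ fun z => hB _))
    (hm.mul ((cc s hS).add
      (Continuous.aestronglyMeasurable (by fun_prop) |>.mul (cc s hT)))) ?_ ?_ ?_).2
  · refine hder.congr_deriv ?_
    rw [integral_heatK_mul hs (fun t => adj φ (s, t)), ← integral_neg]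
    have i1 : Integrable (fun z : ℝ => heatK (1, z) * dS φ (s, √s * z)) :=
      integrable_heatK_one.mul_bdd (cc s hS) (ae_of_all _ fun z => hC _)
    have i2 : Integrable (fun z : ℝ => heatK (1, z) * (z / (2 * √s) * dT φ (s, √s * z))) := by
      have := (integrable_id_mul_heatK_one.mul_bdd (cc s hT)
        (ae_of_all _ fun z => hD _)).const_mul (1 / (2 * √s))
      refine this.congr (ae_of_all _ fun z => ?_)
      simp only; ring
    have i3 : Integrable (fun z : ℝ => heatK (1, z) * dT (dT φ) (s, √s * z)) :=
      integrable_heatK_one.mul_bdd (cc s hTT) (ae_of_all _ fun z => hE _)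
    simp_rw [mul_add]
    rw [integral_add i1 i2, gaussian_by_parts hT (compact_dT hc) hs, ← integral_add i1 i3]
    congr 1; ext z; simp only [adj]; ring
  · refine ae_of_all _ fun z σ hσ => ?_
    have hσ' : s / 2 < σ := hσ
    have h0 : 0 < √(s / 2) := by positivity
    have h1 : √(s / 2) ≤ √σ := Real.sqrt_le_sqrt hσ'.le
    rw [norm_mul, Real.norm_of_nonneg (heatK_nonneg _), abs_mul,
      abs_of_nonneg (heatK_nonneg _)]
    have h2 : ‖z / (2 * √σ) * dT φ (σ, √σ * z)‖ ≤ |z| * (D / (2 * √(s / 2))) := by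
      rw [norm_mul, norm_div, Real.norm_eq_abs z, Real.norm_of_nonneg (by positivity : 0 ≤ 2 * √σ),
        div_mul_eq_mul_div, mul_div_assoc]
      gcongr
      exact hD _
    calc heatK (1, z) * ‖dS φ (σ, √σ * z) + z / (2 * √σ) * dT φ (σ, √σ * z)‖
        ≤ heatK (1, z) * (C + |z| * (D / (2 * √(s / 2)))) := by
          gcongr
          · exact heatK_nonneg _
          · exact (norm_add_le _ _).trans (add_le_add (hC _) h2)
      _ = _ := by ring
  · exact (integrable_heatK_one.mul_const _).add (integrable_id_mul_heatK_one.abs.mul_const _)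
  · refine ae_of_all _ fun z σ hσ => ?_
    have hσ' : s / 2 < σ := hσ
    exact (hasDerivAt_curve hφ (by linarith) z).const_mul _

/-- The heat kernel is a fundamental solution: `∂_s heatK - ∂_t² heatK = δ₀`. -/
lemma integral_heatK_mul_adj {φ : ℝ × ℝ → ℝ} (hφ : ContDiff ℝ ∞ φ)
    (hc : HasCompactSupport φ) : ∫ p, heatK p * adj φ p = φ 0 := by
  have hint : Integrable (fun p => heatK p * adj φ p) :=
    locallyIntegrable_heatK.integrable_smul_right_of_hasCompactSupport
      (contDiff_adj hφ).continuous (compact_adj hc)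
  rw [Measure.volume_eq_prod] at hint ⊢
  rw [integral_prod _ hint]
  have hA : Integrable (fun s => ∫ t, heatK (s, t) * adj φ (s, t)) := hint.integral_prod_left
  rw [← setIntegral_eq_integral_of_forall_compl_eq_zero (s := Ioi 0)]
  swap
  · intro s hs
    simp [heatK_of_nonpos (p := (s, _)) (not_lt.1 hs)]
  obtain ⟨B, hB⟩ := hc.exists_bound_of_continuous hφ.continuous
  have hcont : Continuous (fun s => ∫ z, heatK (1, z) * φ (s, √s * z)) := by
    refine continuous_of_dominated (bound := fun z => heatK (1, z) * B) (fun s => ?_)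
      (fun s => ae_of_all _ fun z => ?_) (integrable_heatK_one.mul_const B)
      (ae_of_all _ fun z => ?_)
    · exact integrable_heatK_one.1.mul (Continuous.aestronglyMeasurable
        (hφ.continuous.comp (by fun_prop)))
    · rw [norm_mul, Real.norm_of_nonneg (heatK_nonneg _)]
      exact mul_le_mul_of_nonneg_left (hB _) (heatK_nonneg _)
    · exact continuous_const.mul (hφ.continuous.comp (by fun_prop))
  have htend : Tendsto (fun s => ∫ z, heatK (1, z) * φ (s, √s * z)) atTop (𝓝 0) := by
    obtain ⟨M, hM⟩ := hc.isCompact.isBounded.subset_closedBall 0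
    refine tendsto_const_nhds.congr' ?_
    filter_upwards [eventually_gt_atTop M] with s hs
    have : ∀ z, φ (s, √s * z) = 0 := by
      intro z
      refine image_eq_zero_of_notMem_tsupport fun h => ?_
      have h1 := hM h
      rw [mem_closedBall_zero_iff] at h1
      have h2 := (norm_fst_le ((s, √s * z) : ℝ × ℝ)).trans h1
      have h3 := (le_abs_self s).trans h2
      linarith
    simp [this]
  have := integral_Ioi_of_hasDerivAt_of_tendsto (a := 0) hcont.continuousWithinAt
    (fun s hs => hasDerivAt_average hφ hc hs) hA.neg.integrableOn htend
  rw [integral_neg] at this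
  have h0 : ∫ z, heatK (1, z) * φ (0, √0 * z) = φ 0 := by
    simp only [Real.sqrt_zero, zero_mul]
    rw [integral_mul_const, integral_heatK_one, one_mul]
    rfl
  rw [h0] at this
  linarith

/-! ### The parametrix -/

/-- Truncating the heat kernel by a cutoff `χ` equal to `1` near the origin changes the
fundamental solution property only by a smooth compactly supported error `η`. -/
lemma exists_parametrix {χ : ℝ × ℝ → ℝ} (hχ : ContDiff ℝ ∞ χ) (hχc : HasCompactSupport χ)
    (hχ1 : χ =ᶠ[𝓝 0] fun _ => 1) :
    ∃ η : ℝ × ℝ → ℝ, ContDiff ℝ ∞ η ∧ HasCompactSupport η ∧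
      ∀ φ : ℝ × ℝ → ℝ, ContDiff ℝ ∞ φ → HasCompactSupport φ →
        ∫ p, heatK p * χ p * adj φ p = φ 0 - ∫ p, η p * φ p := by
  have hT := contDiff_dT hχ
  have hT0 : dT χ =ᶠ[𝓝 0] fun _ => 0 := by
    have := dT_eventually_congr hχ1
    rwa [dT_const] at this
  have hA0 : adj χ =ᶠ[𝓝 0] fun _ => 0 := by
    have h1 := dS_eventually_congr hχ1
    rw [dS_const] at h1
    have h2 := dT_eventually_congr hT0
    rw [dT_const] at h2
    filter_upwards [h1, h2] with p hp1 hp2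
    simp [adj, hp1, hp2]
  have s1 := contDiff_heatK_mul (contDiff_adj hχ) hA0
  have s2 := contDiff_heatK_mul hT hT0
  have s3 := contDiff_dT s2
  have c1 : HasCompactSupport (fun p => heatK p * adj χ p) := (compact_adj hχc).mul_left
  have c2 : HasCompactSupport (fun p => heatK p * dT χ p) := (compact_dT hχc).mul_left
  have c3 := compact_dT c2
  refine ⟨fun p => heatK p * adj χ p + 2 * dT (fun p => heatK p * dT χ p) p,
    s1.add (contDiff_const.mul s3), c1.add (c3.mul_left (f := fun _ => (2 : ℝ))), ?_⟩
  intro φ hφ hφc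
  have f0 := integral_heatK_mul_adj (hχ.mul hφ) (hφc.mul_left)
  have f1 := integral_mul_dT s2 hφ hφc
  have hφT := contDiff_dT hφ
  have i1 : Integrable (fun p => heatK p * adj (fun p => χ p * φ p) p) :=
    locallyIntegrable_heatK.integrable_smul_right_of_hasCompactSupport
      (contDiff_adj (hχ.mul hφ)).continuous (compact_adj hφc.mul_left)
  have i2 : Integrable (fun p => heatK p * adj χ p * φ p) :=
    (s1.continuous.mul hφ.continuous).integrable_of_hasCompactSupport hφc.mul_left
  have i3 : Integrable (fun p => heatK p * dT χ p * dT φ p) :=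
    (s2.continuous.mul hφT.continuous).integrable_of_hasCompactSupport (compact_dT hφc).mul_left
  have i4 : Integrable (fun p => dT (fun p => heatK p * dT χ p) p * φ p) :=
    (s3.continuous.mul hφ.continuous).integrable_of_hasCompactSupport hφc.mul_left
  have e1 : ∫ p, heatK p * χ p * adj φ p
      = (∫ p, heatK p * adj (fun p => χ p * φ p) p) - (∫ p, heatK p * adj χ p * φ p)
        + 2 * ∫ p, heatK p * dT χ p * dT φ p := by
    have i12 : Integrable (fun p => heatK p * adj (fun p => χ p * φ p) p
      - heatK p * adj χ p * φ p) := i1.sub i2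
    rw [← integral_const_mul, ← integral_sub i1 i2, ← integral_add i12 (i3.const_mul 2)]
    congr 1; ext p
    rw [adj_mul hχ hφ]; ring
  have e2 : ∫ p, (heatK p * adj χ p + 2 * dT (fun p => heatK p * dT χ p) p) * φ p
      = (∫ p, heatK p * adj χ p * φ p)
        + 2 * ∫ p, dT (fun p => heatK p * dT χ p) p * φ p := by
    rw [← integral_const_mul, ← integral_add i2 (i4.const_mul 2)]
    congr 1; ext p; ring
  have f0' : ∫ p, heatK p * adj (fun p => χ p * φ p) p = φ 0 := by
    refine f0.trans ?_
    simp [hχ1.self_of_nhds]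
  rw [e1, e2, f0', f1]
  ring

/-! ### Interior regularity -/

/-- Convolution, `(K ⋆ f)(x) = ∫ K(y) f(x - y) dy`, for the multiplication of real numbers. -/
noncomputable def convol (K f : ℝ × ℝ → ℝ) : ℝ × ℝ → ℝ :=
  K ⋆[ContinuousLinearMap.mul ℝ ℝ, volume] f

lemma conv_apply (K f : ℝ × ℝ → ℝ) (x : ℝ × ℝ) : convol K f x = ∫ y, K y * f (x - y) := rfl

lemma contDiff_conv {K f : ℝ × ℝ → ℝ} (hK : LocallyIntegrable K) (hf : ContDiff ℝ ∞ f)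
    (hc : HasCompactSupport f) : ContDiff ℝ ∞ (convol K f) :=
  hc.contDiff_convolution_right (n := ⊤) _ hK hf

lemma fderiv_conv {K f : ℝ × ℝ → ℝ} (hK : LocallyIntegrable K) (hf : ContDiff ℝ ∞ f)
    (hc : HasCompactSupport f) (x v : ℝ × ℝ) :
    fderiv ℝ (convol K f) x v = convol K (fun p => fderiv ℝ f p v) x := by
  have hf1 : ContDiff ℝ 1 f := hf.of_le (by exact_mod_cast le_top)
  have h := hc.hasFDerivAt_convolution_right (ContinuousLinearMap.mul ℝ ℝ) hK hf1 x
  have h' : fderiv ℝ (convol K f) x = _ := h.fderiv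
  rw [h', convolution_precompR_apply _ hK (hc.fderiv ℝ) (hf1.continuous_fderiv one_ne_zero)]
  rfl

lemma dS_conv {K f : ℝ × ℝ → ℝ} (hK : LocallyIntegrable K) (hf : ContDiff ℝ ∞ f)
    (hc : HasCompactSupport f) : dS (convol K f) = convol K (dS f) := by
  rw [dS_eq_fun (contDiff_conv hK hf hc), dS_eq_fun hf]
  exact funext fun x => fderiv_conv hK hf hc x _

lemma dT_conv {K f : ℝ × ℝ → ℝ} (hK : LocallyIntegrable K) (hf : ContDiff ℝ ∞ f)
    (hc : HasCompactSupport f) : dT (convol K f) = convol K (dT f) := by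
  rw [dT_eq_fun (contDiff_conv hK hf hc), dT_eq_fun hf]
  exact funext fun x => fderiv_conv hK hf hc x _

lemma adj_conv {K f : ℝ × ℝ → ℝ} (hK : LocallyIntegrable K) (hf : ContDiff ℝ ∞ f)
    (hc : HasCompactSupport f) : adj (convol K f) = convol K (adj f) := by
  have hT := contDiff_dT hf
  have i : ∀ {g : ℝ × ℝ → ℝ} (x : ℝ × ℝ), ContDiff ℝ ∞ g → HasCompactSupport g →
      Integrable (fun y => K y * g (x - y)) := fun x hg hgc =>
    hgc.convolutionExists_right (ContinuousLinearMap.mul ℝ ℝ) hK hg.continuous x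
  ext x
  simp only [adj]
  rw [dS_conv hK hf hc, dT_conv hK hf hc, dT_conv hK hT (compact_dT hc)]
  simp only [conv_apply]
  have i1 : Integrable (fun y => -(K y * dS f (x - y))) :=
    (i x (contDiff_dS hf) (compact_dS hc)).neg
  rw [← integral_neg, ← integral_sub i1
    (i x (contDiff_dT hT) (compact_dT (compact_dT hc)))]
  congr 1; ext y; simp only [adj]; ring

lemma conv_reflect (E f : ℝ × ℝ → ℝ) (x : ℝ × ℝ) :
    convol (fun y => E (-y)) f x = ∫ y, E y * f (x + y) := by
  rw [conv_apply, ← integral_neg_eq_self (fun y => E y * f (x + y))]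
  simp [sub_eq_add_neg]

/-- Fubini: moving a convolution with a smooth kernel from the test function to `u₀`. -/
lemma integral_mul_integral_translate {u₀ η φ : ℝ × ℝ → ℝ} (hu : Integrable u₀)
    (hη : Continuous η) (hηc : HasCompactSupport η) (hφ : Continuous φ)
    (hφc : HasCompactSupport φ) :
    ∫ x, u₀ x * ∫ y, η y * φ (x + y) = ∫ y, φ y * convol u₀ η y := by
  obtain ⟨C, hC⟩ := hηc.exists_bound_of_continuous hη
  have hint : Integrable (Function.uncurry fun x y : ℝ × ℝ => u₀ x * φ y * η (y - x))
      (volume.prod volume) :=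
    (hu.mul_prod (hφ.integrable_of_hasCompactSupport hφc)).mul_bdd
      (Continuous.aestronglyMeasurable (by fun_prop)) (ae_of_all _ fun z => hC _)
  have h1 : ∀ x, ∫ y, u₀ x * φ y * η (y - x) = u₀ x * ∫ y, η y * φ (x + y) := by
    intro x
    rw [← integral_const_mul, ← integral_add_left_eq_self (fun y => u₀ x * φ y * η (y - x)) x]
    congr 1; ext y
    rw [add_sub_cancel_left]; ring
  have h2 : ∀ y, ∫ x, u₀ x * φ y * η (y - x) = φ y * convol u₀ η y := by
    intro y
    rw [conv_apply, ← integral_const_mul]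
    congr 1; ext x; ring
  simp_rw [← h1, ← h2]
  exact integral_integral_swap hint

/-- Near each point of `Ω`, a weak solution agrees almost everywhere with the smooth function
`u₀ ⋆ η`, where `u₀` is a truncation of `u` and `η` the error of the parametrix. -/
lemma exists_local_smooth {Ω : Set (ℝ × ℝ)} (hΩ : IsOpen Ω)
    {u : ℝ × ℝ → ℝ} (hu : LocallyIntegrableOn u Ω)
    (hweak : ∀ φ : ℝ × ℝ → ℝ, ContDiff ℝ ∞ φ → HasCompactSupport φ →
      tsupport φ ⊆ Ω → ∫ p in Ω, u p * adj φ p = 0) {p : ℝ × ℝ} (hp : p ∈ Ω) :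
    ∃ r > 0, Metric.ball p r ⊆ Ω ∧ ∃ w : ℝ × ℝ → ℝ, ContDiff ℝ ∞ w ∧
      ∀ᵐ x, x ∈ Metric.ball p r → u x = w x := by
  obtain ⟨R, hR, hRΩ⟩ := Metric.nhds_basis_closedBall.mem_iff.1 (hΩ.mem_nhds hp)
  have hr : 0 < R / 2 := by positivity
  set B := Metric.closedBall p R with hB
  have hBm : MeasurableSet B := Metric.isClosed_closedBall.measurableSet
  have hsub : Metric.ball p (R / 2) ⊆ B :=
    (Metric.ball_subset_closedBall).trans (Metric.closedBall_subset_closedBall (by linarith))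
  have hu₀ : Integrable (B.indicator u) :=
    (integrable_indicator_iff hBm).2
      (hu.integrableOn_compact_subset hRΩ (isCompact_closedBall p R))
  let χ : ContDiffBump (0 : ℝ × ℝ) := ⟨R / 4, R / 2, by positivity, by linarith⟩
  have hχ : ContDiff ℝ ∞ χ := χ.contDiff
  obtain ⟨η, hη, hηc, hpar⟩ := exists_parametrix hχ χ.hasCompactSupport χ.eventuallyEq_one
  set E : ℝ × ℝ → ℝ := fun y => heatK y * χ y with hE
  have hEi : Integrable E :=
    locallyIntegrable_heatK.integrable_smul_right_of_hasCompactSupport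
      hχ.continuous χ.hasCompactSupport
  have hK : LocallyIntegrable (fun y => E (-y)) := hEi.comp_neg.locallyIntegrable
  have hKc : HasCompactSupport (fun y => E (-y)) :=
    HasCompactSupport.comp_homeomorph (f := E) (χ.hasCompactSupport.mul_left) (Homeomorph.neg _)
  refine ⟨R / 2, hr, hsub.trans hRΩ, convol (B.indicator u) η,
    contDiff_conv hu₀.locallyIntegrable hη hηc, ?_⟩
  have hw := contDiff_conv hu₀.locallyIntegrable hη hηc
  have hloc : LocallyIntegrable (fun x => B.indicator u x - convol (B.indicator u) η x) :=
    hu₀.locallyIntegrable.sub hw.continuous.locallyIntegrable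
  have key : ∀ᵐ x, x ∈ Metric.ball p (R / 2) →
      B.indicator u x - convol (B.indicator u) η x = 0 := by
    refine Metric.isOpen_ball.ae_eq_zero_of_integral_contDiff_smul_eq_zero
      (hloc.locallyIntegrableOn _) fun φ hφ hφc hφB => ?_
    set ψ := convol (fun y => E (-y)) φ with hψ
    have hψs : ContDiff ℝ ∞ ψ := contDiff_conv hK hφ hφc
    have hψc : HasCompactSupport ψ := HasCompactSupport.convolution _ hKc hφc
    have hψB : tsupport ψ ⊆ B := by
      refine closure_minimal (fun x hx => ?_) Metric.isClosed_closedBall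
      by_contra hxB
      refine hx ?_
      rw [hψ, conv_reflect]
      refine integral_eq_zero_of_ae (ae_of_all _ fun y => ?_)
      by_contra hne
      have hne' : E y * φ (x + y) ≠ 0 := hne
      have h1 : χ y ≠ 0 := fun h => hne' (by simp [hE, h])
      have h2 : φ (x + y) ≠ 0 := fun h => hne' (by simp [h])
      have h3 : y ∈ Metric.ball (0 : ℝ × ℝ) (R / 2) := by
        have : y ∈ Function.support χ := h1
        rwa [χ.support_eq] at this
      have h4 : x + y ∈ Metric.ball p (R / 2) := hφB (subset_tsupport _ h2)
      refine hxB ?_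
      rw [mem_ball_zero_iff] at h3
      rw [Metric.mem_ball] at h4
      have h5 : dist x (x + y) = ‖y‖ := by simp
      rw [hB, Metric.mem_closedBall]
      linarith [dist_triangle x (x + y) p]
    have hadj : ∀ x, adj ψ x = φ x - ∫ y, η y * φ (x + y) := by
      intro x
      rw [hψ, adj_conv hK hφ hφc, conv_reflect]
      have hxc : HasCompactSupport (fun y => φ (x + y)) :=
        hφc.comp_homeomorph (Homeomorph.addLeft x)
      have := hpar (fun y => φ (x + y)) (hφ.comp (by fun_prop)) hxc
      rw [adj_translate] at this
      simpa using this
    have hzero : ∀ x, x ∉ B → adj ψ x = 0 := fun x hx =>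
      image_eq_zero_of_notMem_tsupport fun h => hx (hψB (tsupport_adj_subset ψ h))
    have h0 := hweak ψ hψs hψc (hψB.trans hRΩ)
    rw [setIntegral_eq_integral_of_forall_compl_eq_zero
      (fun x hx => by rw [hzero x fun h => hx (hRΩ h), mul_zero])] at h0
    have h1 : ∫ x, B.indicator u x * adj ψ x = 0 := by
      rw [← h0]
      congr 1; ext x
      by_cases hx : x ∈ B
      · rw [indicator_of_mem hx]
      · rw [hzero x hx, mul_zero, mul_zero]
    obtain ⟨C, hC⟩ := hφc.exists_bound_of_continuous hφ.continuous
    obtain ⟨D, hD⟩ := (compact_adj hψc).exists_bound_of_continuous (contDiff_adj hψs).continuous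
    have i1 : Integrable (fun x => B.indicator u x * φ x) :=
      hu₀.mul_bdd hφ.continuous.aestronglyMeasurable (ae_of_all _ hC)
    have i2 : Integrable (fun x => B.indicator u x * adj ψ x) :=
      hu₀.mul_bdd (contDiff_adj hψs).continuous.aestronglyMeasurable (ae_of_all _ hD)
    have i3 : Integrable (fun x => φ x * convol (B.indicator u) η x) :=
      (hφ.continuous.mul hw.continuous).integrable_of_hasCompactSupport hφc.mul_right
    have h2 : ∫ x, B.indicator u x * ∫ y, η y * φ (x + y)
        = ∫ x, B.indicator u x * φ x := by
      rw [← sub_zero (∫ x, B.indicator u x * φ x), ← h1, ← integral_sub i1 i2]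
      congr 1; ext x
      rw [hadj]; ring
    rw [integral_mul_integral_translate hu₀ hη.continuous hηc hφ.continuous hφc] at h2
    have h3 : ∫ x, φ x • (B.indicator u x - convol (B.indicator u) η x)
        = (∫ x, B.indicator u x * φ x) - ∫ x, φ x * convol (B.indicator u) η x := by
      rw [← integral_sub i1 i3]
      congr 1; ext x; rw [smul_eq_mul]; ring
    rw [h3, h2, sub_self]
  filter_upwards [key] with x hx hxB
  have := hx hxB
  rw [indicator_of_mem (hsub hxB)] at this
  linarith

end ParabolicWeyl

open ParabolicWeyl Topology Filter

/-- Parabolic Weyl lemma (interior version): a locally integrable weak solution of the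
one-dimensional heat equation agrees a.e. with a smooth classical solution. -/
theorem parabolic_weyl (Ω : Set (ℝ × ℝ)) (hΩ : IsOpen Ω)
    (u : ℝ × ℝ → ℝ) (hu : LocallyIntegrableOn u Ω)
    (hweak : ∀ φ : ℝ × ℝ → ℝ, ContDiff ℝ (⊤ : ℕ∞) φ → HasCompactSupport φ →
      tsupport φ ⊆ Ω →
      ∫ p in Ω, u p * (-(dS φ p) - dT (dT φ) p) = 0) :
    ∃ v : ℝ × ℝ → ℝ, ContDiffOn ℝ (⊤ : ℕ∞) v Ω ∧
      (∀ᵐ p ∂ volume.restrict Ω, u p = v p) ∧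
      ∀ p ∈ Ω, dS v p - dT (dT v) p = 0 := by
  classical
  choose! r hr hrΩ w hw huw using fun p (hp : p ∈ Ω) => exists_local_smooth hΩ hu hweak hp
  -- Two local representatives are continuous and agree a.e., hence everywhere, where both live;
  -- so the diagonal choice `q ↦ w q q` coincides with `w p` near `p`.
  have hdiag : ∀ p ∈ Ω, ∀ q ∈ Metric.ball p (r p), w q q = w p q := by
    intro p hp q hq
    have hqΩ := hrΩ p hp hq
    have hUo : IsOpen (Metric.ball p (r p) ∩ Metric.ball q (r q)) :=
      Metric.isOpen_ball.inter Metric.isOpen_ball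
    have hae : w q =ᵐ[volume.restrict (Metric.ball p (r p) ∩ Metric.ball q (r q))] w p := by
      refine (ae_restrict_iff' hUo.measurableSet).2 ?_
      filter_upwards [huw p hp, huw q hqΩ] with x h1 h2 hx
      rw [← h1 hx.1, ← h2 hx.2]
    exact Measure.eqOn_open_of_ae_eq hae hUo (hw q hqΩ).continuous.continuousOn
      (hw p hp).continuous.continuousOn ⟨hq, Metric.mem_ball_self (hr q hqΩ)⟩
  have hev : ∀ p ∈ Ω, (fun q => w q q) =ᶠ[𝓝 p] w p := fun p hp =>
    Filter.eventually_of_mem (Metric.ball_mem_nhds p (hr p hp)) (hdiag p hp)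
  refine ⟨fun q => w q q, fun p hp => ?_, ?_, fun p hp => ?_⟩
  · exact ((hw p hp).contDiffAt.congr_of_eventuallyEq (hev p hp)).contDiffWithinAt
  · rw [ae_restrict_iff' hΩ.measurableSet, ae_iff]
    refine measure_null_of_locally_null _ fun p hp => ?_
    have hpΩ : p ∈ Ω := by by_contra h; exact hp fun h' => absurd h' h
    refine ⟨_, inter_mem_nhdsWithin _ (Metric.ball_mem_nhds p (hr p hpΩ)), ?_⟩
    refine measure_mono_null (fun x hx => ?_) (ae_iff.1 (huw p hpΩ))
    intro h
    exact hx.1 fun _ => (h hx.2).trans (hdiag p hpΩ x hx.2).symm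
  · have hvT := dT_eventually_congr (hev p hp)
    rw [dS_congr (hev p hp), dT_congr hvT]
    refine heat_of_weak (hw p hp) (Metric.isOpen_ball (x := p) (ε := r p))
      (fun φ hφ hφc hφB => ?_) p (Metric.mem_ball_self (hr p hp))
    have h0 := hweak φ hφ hφc (hφB.trans (hrΩ p hp))
    have hzero : ∀ x, x ∉ Metric.ball p (r p) → adj φ x = 0 := fun x hx =>
      image_eq_zero_of_notMem_tsupport fun h => hx (hφB (tsupport_adj_subset φ h))
    have h1 : ∫ x in Ω, u x * adj φ x = 0 := h0
    rw [setIntegral_eq_integral_of_forall_compl_eq_zero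
      (fun x hx => by rw [hzero x fun h => hx (hrΩ p hp h), mul_zero])] at h1
    rw [← h1]
    refine integral_congr_ae ?_
    filter_upwards [huw p hp] with x hx
    by_cases hxB : x ∈ Metric.ball p (r p)
    · rw [hx hxB]
    · rw [hzero x hxB, mul_zero, mul_zero]
end
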